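/- arXiv:2502.09028 — 2 statements merged into one kernel-verified Lean document; each statement's English description precedes it below -/
import Mathlib

section
/- Let k be a nonnegative integer with k ≥ 2, Ω ⊆ ℝ a nonempty open set, and D : C^k(Ω) → C(Ω) an operator satisfying the identity (★): D(f·g·h) − f·D(g·h) − g·D(f·h) − h·D(f·g) + f·g·D(h) + f·h·D(g) + g·h·D(f) = 0 for all f, g, h ∈ C^k(Ω). Then there exist continuous functions c₀, c₁, c₂, d₀₀ : Ω → ℝ such that for all f ∈ C^k(Ω) and all x ∈ Ω: D(f)(x) = c₀(x)·f(x)·ln|f(x)| + c₁(x)·f'(x) + c₂(x)·f''(x) + d₀₀(x)·f(x)·(ln|f(x)|)², with the conventions 0·ln 0 = 0 and 0·(ln 0)² = 0. Moreover, if k = 0 the same conclusion holds with c₁ = c₂ = 0 (no derivative terms), and if k = 1 it holds with c₂ = 0 (no second-derivative term). -/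
/-! The Leibniz defect `Δ(f, g) = D (f g) - f D g - g D f` is symmetric and continuous, and identity (★)
says exactly that it satisfies the Leibniz rule in each argument (`SecondOrderOp.leibnizOp`). Thus
the proof passes through operators `S : C^k(Ω) → C(Ω)` with `S (f g) = f S g + g S f`.

Cutoffs show that all these operators are local. In logarithmic coordinates `f = exp φ`, available
near points where `f > 0`, an operator satisfying the Leibniz rule becomes the additive local
operator `φ ↦ S (exp φ) / exp φ`. Additive local operators `C^k(Ω) → C(Ω)` are linear differential
operators with continuous coefficients (`LocalAdditive.exists_coeff`): they are homogeneous, since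
otherwise a series of tiny bumps accumulating at a point would be a `C^k` function with unbounded
image (`LocalAdditive.homogeneous`), and they see only the `k`-jet, since a function with vanishing
`k`-jet at `x` can be replaced by `0` to the left of `x` (`LocalAdditive.eq_zero_of_jet`).

The functions `y ↦ y - x` are in `C^k(Ω)` although their logarithms are singular. Since their images
are continuous at `x`, all singular terms must cancel (`singular_terms_vanish`). For a Leibniz
operator this leaves `S f = c f log f + d f'`. Applied to the defect in each argument, it gives
`Δ(f, f) = α (f log f)² + (β + γ) f log f f' + δ f'²`. Finally `D f / f - Δ(f, f) / (2 f²)` is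
additive in `log f`, so `D f / f` is a linear differential operator in `log f` plus a known quadratic
part. The same test on `y - x` removes the terms of order at least three, forces `β + γ = 0`, and
links `δ` to the coefficient of `(log f)''` so that the two combine to a multiple of `f'' / f`.
Oddness of `D`, continuity and locality extend the formula to all points. -/

open Set Filter Topology

/-! ### Additive local operators -/

/-- An additive local operator from `C^k(Ω)` to `C(Ω)`. Functions are defined on all of `ℝ`, but
only their regularity and their values on `Ω` are constrained; locality is stated at the points
of `Ω`. -/
structure LocalAdditive (k : ℕ) (Ω : Set ℝ) (A : (ℝ → ℝ) → ℝ → ℝ) : Prop where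
  cont : ∀ f, ContDiffOn ℝ k f Ω → ContinuousOn (A f) Ω
  add : ∀ f g, ContDiffOn ℝ k f Ω → ContDiffOn ℝ k g Ω → ∀ x ∈ Ω,
    A (fun y => f y + g y) x = A f x + A g x
  loc : ∀ f g, ContDiffOn ℝ k f Ω → ContDiffOn ℝ k g Ω → ∀ x ∈ Ω, f =ᶠ[𝓝 x] g → A f x = A g x

lemma exists_bump {x : ℝ} {U : Set ℝ} (hU : U ∈ 𝓝 x) :
    ∃ χ : ℝ → ℝ, (∀ n : ℕ, ContDiff ℝ n χ) ∧ tsupport χ ⊆ U ∧ χ =ᶠ[𝓝 x] fun _ => 1 := by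
  obtain ⟨r, hr, hrU⟩ := Metric.mem_nhds_iff.1 hU
  let b : ContDiffBump x := ⟨r / 4, r / 2, by positivity, by linarith⟩
  refine ⟨b, fun n => b.contDiff, ?_, b.eventuallyEq_one⟩
  rw [b.tsupport_eq]
  exact (Metric.closedBall_subset_ball (by simp only [b]; linarith)).trans hrU

/-- A function multiplied by a cutoff supported in an open set where it is smooth is smooth. -/
lemma contDiff_cutoff {k : ℕ} {U : Set ℝ} (hU : IsOpen U) {χ f : ℝ → ℝ}
    (hχ : ContDiff ℝ k χ) (hs : tsupport χ ⊆ U) (hf : ContDiffOn ℝ k f U) :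
    ContDiff ℝ k (fun y => χ y * f y) := by
  rw [contDiff_iff_contDiffAt]
  intro y
  by_cases hy : y ∈ tsupport χ
  · exact hχ.contDiffAt.mul (hf.contDiffAt (hU.mem_nhds (hs hy)))
  · have h0 : (fun y => χ y * f y) =ᶠ[𝓝 y] fun _ => 0 := by
      filter_upwards [notMem_tsupport_iff_eventuallyEq.1 hy] with z hz
      simp [hz]
    exact contDiffAt_const.congr_of_eventuallyEq h0

/-- An additive function on `ℝ` that violates homogeneity takes large values at small arguments. -/
lemma exists_large_of_not_homogeneous (a : ℝ → ℝ) (hadd : ∀ s t, a (s + t) = a s + a t) {t : ℝ}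
    (ht : a t ≠ t * a 1) {ε : ℝ} (hε : 0 < ε) (M : ℝ) : ∃ s, |s| ≤ ε ∧ M < |a s| := by
  by_contra! hcon
  let F : ℝ →+ ℝ := AddMonoidHom.mk' a hadd
  have hF : Continuous F := by
    refine F.continuous_of_isBounded_nhds_zero (Metric.closedBall_mem_nhds 0 hε) ?_
    refine isBounded_iff_forall_norm_le.2 ⟨M, ?_⟩
    rintro _ ⟨s, hs, rfl⟩
    exact hcon s (by simpa using hs)
  apply ht
  have := map_real_smul F hF t 1
  simpa [F] using this

/-- Bumps around the points `x + r / 2 ^ (n + 1)` with pairwise disjoint supports. -/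
lemma exists_bump_seq (x : ℝ) {r : ℝ} (hr : 0 < r) :
    ∃ (p : ℕ → ℝ) (χ : ℕ → ℝ → ℝ), Tendsto p atTop (𝓝 x) ∧ (∀ n, p n ∈ Metric.ball x r) ∧
      (∀ n, ∀ m : ℕ, ContDiff ℝ m (χ n)) ∧ (∀ n, tsupport (χ n) ⊆ Metric.ball x r) ∧
      (∀ n, HasCompactSupport (χ n)) ∧
      ∀ n, ∀ᶠ z in 𝓝 (p n), ∀ m, χ m z = if m = n then 1 else 0 := by
  have hpos : ∀ n : ℕ, 0 < r * (1 / 2) ^ n := fun n => by positivity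
  have hle : ∀ n : ℕ, r * (1 / 2) ^ n ≤ r := fun n => by
    have : ((1 : ℝ) / 2) ^ n ≤ 1 := pow_le_one₀ (by norm_num) (by norm_num)
    nlinarith
  let p : ℕ → ℝ := fun n => x + r * (1 / 2) ^ n / 2
  let b : ∀ n, ContDiffBump (p n) := fun n =>
    ⟨r * (1 / 2) ^ n / 32, r * (1 / 2) ^ n / 16, by have := hpos n; positivity,
      by have := hpos n; linarith⟩
  refine ⟨p, fun n => b n, ?_, ?_, fun n m => (b n).contDiff, ?_,
    fun n => (b n).hasCompactSupport, ?_⟩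
  · have h1 : Tendsto (fun n : ℕ => ((1 : ℝ) / 2) ^ n) atTop (𝓝 0) :=
      tendsto_pow_atTop_nhds_zero_of_lt_one (by norm_num) (by norm_num)
    have h2 : Tendsto (fun n : ℕ => x + r * (1 / 2) ^ n / 2) atTop (𝓝 (x + r * 0 / 2)) :=
      ((h1.const_mul r).div_const 2).const_add x
    rw [mul_zero, zero_div, add_zero] at h2
    exact h2
  · intro n
    rw [Metric.mem_ball, Real.dist_eq, abs_lt]
    have := hpos n
    have := hle n
    constructor <;> simp only [p] <;> linarith
  · intro n
    rw [(b n).tsupport_eq]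
    intro z hz
    rw [Metric.mem_closedBall, Real.dist_eq, abs_le] at hz
    rw [Metric.mem_ball, Real.dist_eq, abs_lt]
    have := hpos n
    have := hle n
    simp only [p, b] at hz
    constructor <;> linarith [hz.1, hz.2]
  · intro n
    have hn := hpos n
    have hmem : Metric.ball (p n) (r * (1 / 2) ^ n / 32) ∈ 𝓝 (p n) :=
      Metric.ball_mem_nhds _ (by positivity)
    filter_upwards [hmem] with z hz m
    rcases eq_or_ne m n with rfl | hmn
    · rw [if_pos rfl]
      exact (b m).one_of_mem_closedBall (Metric.ball_subset_closedBall hz)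
    · rw [if_neg hmn]
      apply (b m).zero_of_le_dist
      rw [Metric.mem_ball, Real.dist_eq, abs_lt] at hz
      have hm := hpos m
      simp only [p] at hz
      rw [Real.dist_eq, le_abs]
      simp only [p, b]
      -- the scales at distinct indices differ by a factor of at least two
      have hscale : ∀ i j : ℕ, i < j → r * (1 / 2) ^ j ≤ r * (1 / 2) ^ i / 2 := by
        intro i j hij
        have h1 : ((1 : ℝ) / 2) ^ j ≤ (1 / 2) ^ (i + 1) :=
          pow_le_pow_of_le_one (by norm_num) (by norm_num) hij
        rw [pow_succ] at h1
        nlinarith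
      rcases lt_or_gt_of_ne hmn with h | h
      · right
        have := hscale m n h
        linarith [hz.1, hz.2]
      · left
        have := hscale n m h
        linarith [hz.1, hz.2]

/-- Additive local operators are homogeneous. If homogeneity fails at one point, it fails by
continuity at all nearby points; large values of `A (t • φ)` for tiny `t` are then realised near
infinitely many points accumulating at the given one by a single `C^k` function. -/
lemma LocalAdditive.homogeneous {k : ℕ} {Ω : Set ℝ} (hΩ : IsOpen Ω) {A : (ℝ → ℝ) → ℝ → ℝ}
    (hA : LocalAdditive k Ω A) {φ : ℝ → ℝ} (hφ : ContDiffOn ℝ k φ Ω) {x : ℝ} (hx : x ∈ Ω) (t : ℝ) :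
    A (fun y => t * φ y) x = t * A φ x := by
  by_contra hne
  have hsm : ∀ s : ℝ, ContDiffOn ℝ k (fun y => s * φ y) Ω := fun s => contDiffOn_const.mul hφ
  have hcont : ContinuousOn (fun y => A (fun y => t * φ y) y - t * A φ y) Ω :=
    (hA.cont _ (hsm t)).sub (continuousOn_const.mul (hA.cont _ hφ))
  have hev : ∀ᶠ y in 𝓝 x, y ∈ Ω ∧ A (fun y => t * φ y) y - t * A φ y ≠ 0 :=
    (hΩ.eventually_mem hx).and
      ((hcont.continuousAt (hΩ.mem_nhds hx)).eventually_ne (sub_ne_zero.2 hne))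
  obtain ⟨r, hr, hball⟩ := Metric.eventually_nhds_iff_ball.1 hev
  obtain ⟨p, χ, hp, hpr, hχ, hχs, hχc, hχ1⟩ := exists_bump_seq x hr
  have hg : ∀ n, ContDiff ℝ k (fun y => χ n y * φ y) := fun n =>
    contDiff_cutoff hΩ (hχ n k) ((hχs n).trans fun y hy => (hball y hy).1) hφ
  have hgc : ∀ n, HasCompactSupport (fun y => χ n y * φ y) := fun n => (hχc n).mul_right
  have hbd : ∀ n, ∃ M : ℝ, 0 ≤ M ∧ ∀ j ≤ k, ∀ z,
      ‖iteratedFDeriv ℝ j (fun y => χ n y * φ y) z‖ ≤ M := by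
    intro n
    have h1 : ∀ j, ∃ C : ℝ, j ≤ k → ∀ z,
        ‖iteratedFDeriv ℝ j (fun y => χ n y * φ y) z‖ ≤ C := by
      intro j
      by_cases hj : j ≤ k
      · obtain ⟨C, hC⟩ := ((hgc n).iteratedFDeriv (𝕜 := ℝ) j).exists_bound_of_continuous
          ((hg n).continuous_iteratedFDeriv (by exact_mod_cast hj))
        exact ⟨C, fun _ => hC⟩
      · exact ⟨0, fun h => absurd h hj⟩
    choose C hC using h1
    refine ⟨∑ j ∈ Finset.range (k + 1), |C j|, Finset.sum_nonneg fun _ _ => abs_nonneg _, ?_⟩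
    intro j hj z
    refine (hC j hj z).trans ((le_abs_self _).trans ?_)
    exact Finset.single_le_sum (f := fun j => |C j|) (fun _ _ => abs_nonneg _)
      (Finset.mem_range.2 (by omega))
  choose M hM0 hM using hbd
  have hlarge : ∀ n : ℕ, ∃ s : ℝ, |s| ≤ (1 / 2) ^ n / (1 + M n) ∧
      (n : ℝ) < |A (fun y => s * φ y) (p n)| := by
    intro n
    have hpn := hball _ (hpr n)
    refine exists_large_of_not_homogeneous (fun s => A (fun y => s * φ y) (p n)) ?_ (t := t) ?_
      (by have := hM0 n; positivity) n
    · intro s s'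
      have := hA.add _ _ (hsm s) (hsm s') _ hpn.1
      simpa only [add_mul] using this
    · have := hpn.2
      simpa [sub_eq_zero] using this
  choose s hs1 hs2 using hlarge
  have hψ : ContDiff ℝ k (fun y => ∑' n, s n * (χ n y * φ y)) := by
    have := contDiff_tsum (𝕜 := ℝ) (N := (k : ℕ∞)) (f := fun n y => s n * (χ n y * φ y))
      (v := fun _ n => (1 / 2 : ℝ) ^ n) (fun n => contDiff_const.mul (hg n))
      (fun _ _ => summable_geometric_of_lt_one (by norm_num) (by norm_num)) ?_
    · exact_mod_cast this
    · intro j n z hj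
      have hj' : j ≤ k := by exact_mod_cast hj
      have h1 : iteratedFDeriv ℝ j (fun y => s n * (χ n y * φ y)) z
          = s n • iteratedFDeriv ℝ j (fun y => χ n y * φ y) z :=
        iteratedFDeriv_const_smul_apply (a := s n) ((hg n).contDiffAt.of_le (by exact_mod_cast hj'))
      rw [h1, norm_smul, Real.norm_eq_abs]
      have h2 := hM n j hj' z
      have h3 := hM0 n
      calc |s n| * _ ≤ ((1 / 2) ^ n / (1 + M n)) * (1 + M n) :=
            mul_le_mul (hs1 n) (by linarith) (norm_nonneg _) (by positivity)
        _ = (1 / 2) ^ n := by field_simp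
  have hval : ∀ n, A (fun y => ∑' n, s n * (χ n y * φ y)) (p n) = A (fun y => s n * φ y) (p n) := by
    intro n
    refine hA.loc _ _ hψ.contDiffOn (hsm _) _ (hball _ (hpr n)).1 ?_
    filter_upwards [hχ1 n] with z hz
    rw [tsum_eq_single n]
    · simp [hz]
    · intro m hm
      simp [hz, hm]
  have hlim : Tendsto (fun n => |A (fun y => ∑' n, s n * (χ n y * φ y)) (p n)|) atTop
      (𝓝 |A (fun y => ∑' n, s n * (χ n y * φ y)) x|) :=
    (((hA.cont _ hψ.contDiffOn).continuousAt (hΩ.mem_nhds hx)).tendsto.comp hp).abs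
  refine not_tendsto_nhds_of_tendsto_atTop ?_ _ hlim
  refine tendsto_atTop_mono (fun n => ?_) tendsto_natCast_atTop_atTop
  rw [hval]
  exact (hs2 n).le

/-- Cutting off to the left of `x` a function whose `k`-jet at `x` vanishes preserves `C^k`. -/
lemma contDiffOn_glue {Ω : Set ℝ} (hΩ : IsOpen Ω) {x : ℝ} (hx : x ∈ Ω) : ∀ (k : ℕ) (φ : ℝ → ℝ),
    ContDiffOn ℝ k φ Ω → (∀ i ≤ k, iteratedDeriv i φ x = 0) →
      ContDiffOn ℝ k (fun y => if x ≤ y then φ y else 0) Ω := by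
  intro k
  induction k with
  | zero =>
    intro φ hφ h0
    have hφ0 : φ x = 0 := by simpa using h0 0 le_rfl
    simp only [Nat.cast_zero, contDiffOn_zero] at hφ ⊢
    refine ContinuousOn.if ?_ (hφ.mono inter_subset_left) continuousOn_const
    intro a ha
    have hax : a = x := by
      have : a ∈ frontier (Ici x) := ha.2
      simpa using this
    rw [hax, hφ0]
  | succ k ih =>
    intro φ hφ h0
    have hφ0 : φ x = 0 := by simpa using h0 0 (by omega)
    have hφ1 : deriv φ x = 0 := by simpa using h0 1 (by omega)
    push_cast at hφ ⊢
    rw [contDiffOn_succ_iff_deriv_of_isOpen hΩ] at hφ ⊢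
    have hglue := ih (deriv φ) hφ.2.2 (fun i hi => by
      rw [← iteratedDeriv_succ']; exact h0 (i + 1) (by omega))
    have hder : ∀ y ∈ Ω, HasDerivAt (fun y => if x ≤ y then φ y else 0)
        (if x ≤ y then deriv φ y else 0) y := by
      intro y hy
      have hd : HasDerivAt φ (deriv φ y) y := ((hφ.1 y hy).differentiableAt
        (hΩ.mem_nhds hy)).hasDerivAt
      rcases lt_trichotomy y x with h | rfl | h
      · rw [if_neg (not_le.2 h)]
        refine (hasDerivAt_const y (0 : ℝ)).congr_of_eventuallyEq ?_
        filter_upwards [gt_mem_nhds h] with z hz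
        rw [if_neg (not_le.2 hz)]
      · rw [if_pos le_rfl, hφ1]
        rw [hφ1] at hd
        rw [hasDerivAt_iff_isLittleO] at hd ⊢
        refine Asymptotics.IsLittleO.of_norm_left ?_
        refine Asymptotics.IsBigO.trans_isLittleO ?_ hd
        refine Asymptotics.IsBigO.of_bound 1 (Eventually.of_forall fun z => ?_)
        by_cases hz : y ≤ z <;> simp [hz, hφ0]
      · rw [if_pos h.le]
        refine hd.congr_of_eventuallyEq ?_
        filter_upwards [lt_mem_nhds h] with z hz
        rw [if_pos hz.le]
    refine ⟨fun y hy => (hder y hy).differentiableAt.differentiableWithinAt, by simp, ?_⟩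
    exact hglue.congr fun y hy => (hder y hy).deriv

/-- Additive local operators only see the `k`-jet. -/
lemma LocalAdditive.eq_zero_of_jet {k : ℕ} {Ω : Set ℝ} (hΩ : IsOpen Ω) {A : (ℝ → ℝ) → ℝ → ℝ}
    (hA : LocalAdditive k Ω A) {φ : ℝ → ℝ} (hφ : ContDiffOn ℝ k φ Ω) {x : ℝ} (hx : x ∈ Ω)
    (h0 : ∀ i ≤ k, iteratedDeriv i φ x = 0) : A φ x = 0 := by
  have hψ := contDiffOn_glue hΩ hx k φ hφ h0
  set ψ : ℝ → ℝ := fun y => if x ≤ y then φ y else 0 with hψdef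
  have hmem : ∀ᶠ y in 𝓝 x, y ∈ Ω := hΩ.mem_nhds hx
  have hzero : ∀ y ∈ Ω, A (fun _ => 0) y = 0 := by
    intro y hy
    have := hA.homogeneous hΩ hφ hy 0
    simpa using this
  have hcψ := ((hA.cont _ hψ).continuousAt (hΩ.mem_nhds hx)).tendsto
  have hcφ := ((hA.cont _ hφ).continuousAt (hΩ.mem_nhds hx)).tendsto
  have hleft : A ψ x = 0 := by
    refine tendsto_nhds_unique (hcψ.mono_left (nhdsWithin_le_nhds (s := Iio x))) ?_
    refine tendsto_const_nhds.congr' ?_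
    filter_upwards [nhdsWithin_le_nhds hmem, self_mem_nhdsWithin] with y hy hyx
    rw [← hzero y hy]
    refine hA.loc _ _ contDiffOn_const hψ y hy ?_
    filter_upwards [gt_mem_nhds hyx] with z hz
    simp only [hψdef]
    rw [if_neg (not_le.2 hz)]
  have hright : A ψ x = A φ x := by
    refine tendsto_nhds_unique (hcψ.mono_left (nhdsWithin_le_nhds (s := Ioi x))) ?_
    refine (hcφ.mono_left nhdsWithin_le_nhds).congr' ?_
    filter_upwards [nhdsWithin_le_nhds hmem, self_mem_nhdsWithin] with y hy hyx
    refine hA.loc _ _ hφ hψ y hy ?_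
    filter_upwards [lt_mem_nhds hyx] with z hz
    simp only [hψdef]
    rw [if_pos hz.le]
  rw [← hright, hleft]

lemma iteratedDeriv_sub_pow_self (i m : ℕ) (x : ℝ) :
    iteratedDeriv i (fun y => (y - x) ^ m) x = if i = m then (m.factorial : ℝ) else 0 := by
  have h := congrFun (iteratedDeriv_comp_sub_const i (fun y : ℝ => y ^ m) x) x
  simp only [iteratedDeriv_pow] at h
  rw [h, sub_self]
  rcases lt_trichotomy i m with hlt | rfl | hgt
  · rw [zero_pow (by omega)]; simp [hlt.ne]
  · simp [Nat.descFactorial_self]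
  · simp [Nat.descFactorial_of_lt hgt, hgt.ne']

lemma LocalAdditive.sum {k : ℕ} {Ω : Set ℝ} (hΩ : IsOpen Ω) {A : (ℝ → ℝ) → ℝ → ℝ}
    (hA : LocalAdditive k Ω A) {x : ℝ} (hx : x ∈ Ω) (c : ℕ → ℝ) (f : ℕ → ℝ → ℝ)
    (hf : ∀ i, ContDiffOn ℝ k (f i) Ω) (n : ℕ) :
    A (fun y => ∑ i ∈ Finset.range n, c i * f i y) x = ∑ i ∈ Finset.range n, c i * A (f i) x := by
  induction n with
  | zero => simpa using hA.homogeneous hΩ (hf 0) hx 0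
  | succ n ih =>
    simp only [Finset.sum_range_succ]
    rw [hA.add _ _ (ContDiffOn.sum fun i _ => contDiffOn_const.mul (hf i))
      (contDiffOn_const.mul (hf n)) x hx, ih, hA.homogeneous hΩ (hf n) hx]

/-- An additive local operator `C^k(Ω) → C(Ω)` is a linear differential operator of order at most
`k` with continuous coefficients. The sum is padded by two vanishing terms so that indices up to
`2` always occur in it. -/
lemma LocalAdditive.exists_coeff {k : ℕ} {Ω : Set ℝ} (hΩ : IsOpen Ω) {A : (ℝ → ℝ) → ℝ → ℝ}
    (hA : LocalAdditive k Ω A) : ∃ a : ℕ → ℝ → ℝ, (∀ i, ContinuousOn (a i) Ω) ∧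
      (∀ i, k < i → a i = 0) ∧ ∀ φ, ContDiffOn ℝ k φ Ω → ∀ x ∈ Ω,
        A φ x = ∑ i ∈ Finset.range (k + 3), a i x * iteratedDeriv i φ x := by
  have hpow : ∀ (x : ℝ) (i : ℕ), ContDiffOn ℝ k (fun y => (y - x) ^ i) Ω := fun x i =>
    ((contDiff_id.sub contDiff_const).pow i).contDiffOn
  let a : ℕ → ℝ → ℝ := fun i x =>
    if i ≤ k then A (fun y => (y - x) ^ i) x / (i.factorial : ℝ) else 0
  have hrep : ∀ φ, ContDiffOn ℝ k φ Ω → ∀ x ∈ Ω,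
      A φ x = ∑ i ∈ Finset.range (k + 1), a i x * iteratedDeriv i φ x := by
    intro φ hφ x hx
    let c : ℕ → ℝ := fun i => -(iteratedDeriv i φ x / (i.factorial : ℝ))
    have hP : ContDiff ℝ k (fun y => ∑ i ∈ Finset.range (k + 1), c i * (y - x) ^ i) :=
      ContDiff.sum fun i _ => contDiff_const.mul ((contDiff_id.sub contDiff_const).pow i)
    have hjet : A (fun y => φ y + ∑ i ∈ Finset.range (k + 1), c i * (y - x) ^ i) x = 0 := by
      refine hA.eq_zero_of_jet hΩ (hφ.add hP.contDiffOn) hx fun i hi => ?_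
      have hik : (i : WithTop ℕ∞) ≤ k := by exact_mod_cast hi
      rw [iteratedDeriv_fun_add ((hφ.contDiffAt (hΩ.mem_nhds hx)).of_le hik)
        (hP.contDiffAt.of_le hik), iteratedDeriv_fun_sum fun j _ =>
          (contDiff_const.mul ((contDiff_id.sub contDiff_const).pow j)).contDiffAt]
      simp only [iteratedDeriv_const_mul_field, iteratedDeriv_sub_pow_self]
      rw [Finset.sum_eq_single i]
      · simp only [c, if_true]
        have : (i.factorial : ℝ) ≠ 0 := by positivity
        field_simp
        ring
      · intro j _ hj
        simp [hj.symm]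
      · intro h
        exact absurd (Finset.mem_range.2 (by omega)) h
    rw [hA.add _ _ hφ hP.contDiffOn x hx,
      hA.sum hΩ hx c (fun i y => (y - x) ^ i) (hpow x)] at hjet
    rw [eq_neg_of_add_eq_zero_left hjet, ← Finset.sum_neg_distrib]
    refine Finset.sum_congr rfl fun i hi => ?_
    have : i ≤ k := by have := Finset.mem_range.1 hi; omega
    simp only [a, c, if_pos this]
    ring
  refine ⟨a, ?_, ?_, ?_⟩
  · -- evaluating at `y ^ i` expresses `a i` through the coefficients of lower index
    intro i
    induction i using Nat.strong_induction_on with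
    | _ i ih =>
    by_cases hi : i ≤ k
    · have hXi : ContDiffOn ℝ k (fun y : ℝ => y ^ i) Ω := (contDiff_id.pow i).contDiffOn
      have hc : ContinuousOn (fun x => (A (fun y => y ^ i) x - ∑ j ∈ Finset.range i,
          a j x * ((i.descFactorial j : ℝ) * x ^ (i - j))) / (i.factorial : ℝ)) Ω := by
        refine ((hA.cont _ hXi).sub (continuousOn_finsetSum _ fun j hj => ?_)).div_const _
        exact (ih j (Finset.mem_range.1 hj)).mul
          (continuousOn_const.mul (continuous_pow _).continuousOn)
      refine hc.congr fun x hx => ?_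
      have h1 := hrep _ hXi x hx
      simp only [iteratedDeriv_pow] at h1
      have h2 : ∑ j ∈ Finset.range (k + 1), a j x * ((i.descFactorial j : ℝ) * x ^ (i - j))
          = ∑ j ∈ Finset.range (i + 1), a j x * ((i.descFactorial j : ℝ) * x ^ (i - j)) := by
        symm
        refine Finset.sum_subset (Finset.range_mono (by omega)) fun j _ hj => ?_
        rw [Nat.descFactorial_of_lt (by simpa using hj)]
        simp
      rw [h2, Finset.sum_range_succ, Nat.descFactorial_self, Nat.sub_self, pow_zero] at h1
      have : (i.factorial : ℝ) ≠ 0 := by positivity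
      rw [eq_div_iff this]
      linarith
    · have : a i = fun _ => 0 := funext fun x => if_neg hi
      rw [this]
      exact continuousOn_const
  · intro i hi
    exact funext fun x => if_neg (not_le.2 hi)
  · intro φ hφ x hx
    rw [hrep φ hφ x hx]
    refine Finset.sum_subset (Finset.range_mono (by omega)) fun j _ hj => ?_
    have : ¬ j ≤ k := by have := Finset.mem_range.not.1 hj; omega
    simp [a, this]

/-! ### Behaviour at a simple zero -/

lemma continuous_mul_log_sq : Continuous fun t : ℝ => t * Real.log t ^ 2 := by
  have hsq : Continuous fun t : ℝ => 4 * (√|t| * Real.log (√|t|)) ^ 2 :=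
    continuous_const.mul ((Real.continuous_mul_log.comp
      (Real.continuous_sqrt.comp continuous_abs)).pow 2)
  have habs : ∀ t : ℝ, |t * Real.log t ^ 2| = 4 * (√|t| * Real.log (√|t|)) ^ 2 := by
    intro t
    rw [Real.log_sqrt (abs_nonneg t), Real.log_abs, mul_pow, Real.sq_sqrt (abs_nonneg t), abs_mul,
      abs_of_nonneg (sq_nonneg (Real.log t))]
    ring
  rw [continuous_iff_continuousAt]
  intro t
  rcases eq_or_ne t 0 with rfl | ht
  · have h : Tendsto (fun t : ℝ => |t * Real.log t ^ 2|) (𝓝 0) (𝓝 0) := by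
      simp only [habs]
      simpa using hsq.tendsto 0
    have h' := (tendsto_zero_iff_abs_tendsto_zero _).2 h
    simpa [ContinuousAt] using h'
  · exact continuousAt_id.mul ((Real.continuousAt_log ht).pow 2)

/-- A combination of `(y - x) log² (y - x)`, `(y - x) log (y - x)`, `log (y - x)` and powers
`(y - x)⁻ⁱ`, with continuous coefficients, that extends continuously to `y = x` for each `x` in an
open set cannot contain any singular term. -/
lemma singular_terms_vanish {Ω : Set ℝ} (hΩ : IsOpen Ω) {p b q : ℝ → ℝ}
    (hp : ContinuousOn p Ω) (hb : ContinuousOn b Ω) (hq : ContinuousOn q Ω)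
    (c : ℕ → ℝ → ℝ) (hc : ∀ i, ContinuousOn (c i) Ω) (N : ℕ)
    (h : ∀ x ∈ Ω, ∃ G : ℝ → ℝ, ContinuousAt G x ∧ ∀ᶠ y in 𝓝[>] x,
      G y = p y * ((y - x) * Real.log (y - x) ^ 2) + b y * ((y - x) * Real.log (y - x))
        + q y * Real.log (y - x) + ∑ i ∈ Finset.range (N + 1), c i y * ((y - x)⁻¹) ^ i) :
    (∀ x ∈ Ω, q x = 0) ∧ ∀ i, 1 ≤ i → i ≤ N → ∀ x ∈ Ω, c i x = 0 := by
  have hlim : ∀ {u : ℝ → ℝ} {x : ℝ}, ContinuousAt u x → Tendsto u (𝓝[>] x) (𝓝 (u x)) :=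
    fun hu => hu.tendsto.mono_left nhdsWithin_le_nhds
  have hlimΩ : ∀ {u : ℝ → ℝ} {x : ℝ}, ContinuousOn u Ω → x ∈ Ω →
      Tendsto u (𝓝[>] x) (𝓝 (u x)) :=
    fun hu hx => hlim (hu.continuousAt (hΩ.mem_nhds hx))
  have hs : ∀ x : ℝ, Tendsto (fun y => y - x) (𝓝[>] x) (𝓝 0) := fun x => by
    simpa using hlim (x := x) (u := fun y => y - x) (by fun_prop)
  have hs' : ∀ x : ℝ, Tendsto (fun y => y - x) (𝓝[>] x) (𝓝[>] 0) := fun x =>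
    tendsto_nhdsWithin_iff.2 ⟨hs x, by
      filter_upwards [self_mem_nhdsWithin] with y hy using mem_Ioi.2 (sub_pos.2 (mem_Ioi.1 hy))⟩
  have hl1 : ∀ x : ℝ, Tendsto (fun y => (y - x) * Real.log (y - x)) (𝓝[>] x) (𝓝 0) := fun x => by
    simpa [Function.comp_def] using (Real.continuous_mul_log.tendsto 0).comp (hs x)
  have hl2 : ∀ x : ℝ, Tendsto (fun y => (y - x) * Real.log (y - x) ^ 2) (𝓝[>] x) (𝓝 0) :=
    fun x => by
      simpa [Function.comp_def] using (continuous_mul_log_sq.tendsto 0).comp (hs x)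
  have hl3 : ∀ x : ℝ, Tendsto (fun y => (Real.log (y - x))⁻¹) (𝓝[>] x) (𝓝 0) := fun x =>
    tendsto_inv_atBot_zero.comp (Real.tendsto_log_nhdsGT_zero.comp (hs' x))
  have hsmall : ∀ x : ℝ, ∀ᶠ y in 𝓝[>] x, y - x < 1 := fun x =>
    (hs x).eventually (gt_mem_nhds one_pos)
  induction N with
  | zero =>
    refine ⟨fun x hx => ?_, fun i h1 h2 => by omega⟩
    obtain ⟨G, hG, hGe⟩ := h x hx
    have h1 := ((((hlim hG).sub ((hlimΩ hp hx).mul (hl2 x))).sub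
      ((hlimΩ hb hx).mul (hl1 x))).sub (hlimΩ (hc 0) hx)).mul (hl3 x)
    rw [mul_zero (G x - _ - _ - _)] at h1
    refine tendsto_nhds_unique (hlimΩ hq hx) (h1.congr' ?_)
    filter_upwards [hGe, self_mem_nhdsWithin, hsmall x] with y hy hxy hy1
    have hlog : Real.log (y - x) ≠ 0 := (Real.log_neg (sub_pos.2 hxy) hy1).ne
    rw [hy]
    simp only [zero_add, Finset.sum_range_one, pow_zero]
    field_simp
    ring
  | succ N ih =>
    have htop : ∀ x ∈ Ω, c (N + 1) x = 0 := by
      intro x hx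
      obtain ⟨G, hG, hGe⟩ := h x hx
      have hsN : ∀ n : ℕ, n ≠ 0 → Tendsto (fun y => (y - x) ^ n) (𝓝[>] x) (𝓝 0) := fun n hn => by
        simpa [hn] using (hs x).pow n
      have h1 := (((((hlim hG).sub ((hlimΩ hp hx).mul (hl2 x))).sub
        ((hlimΩ hb hx).mul (hl1 x))).mul (hsN (N + 1) (by omega))).sub
        (((hlimΩ hq hx).mul (hl1 x)).mul ((hs x).pow N))).sub
        (tendsto_finsetSum (Finset.range (N + 1)) fun i hi =>
          (hlimΩ (hc i) hx).mul (hsN (N + 1 - i) (by have := Finset.mem_range.1 hi; omega)))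
      simp only [mul_zero, zero_mul, sub_zero, Finset.sum_const_zero] at h1
      refine tendsto_nhds_unique (hlimΩ (hc (N + 1)) hx) (h1.congr' ?_)
      filter_upwards [hGe, self_mem_nhdsWithin] with y hy hxy
      have hne : y - x ≠ 0 := (sub_pos.2 hxy).ne'
      have hsum : ∑ i ∈ Finset.range (N + 1), c i y * (y - x) ^ (N + 1 - i)
          = (∑ i ∈ Finset.range (N + 1), c i y * ((y - x)⁻¹) ^ i) * (y - x) ^ (N + 1) := by
        rw [Finset.sum_mul]
        refine Finset.sum_congr rfl fun i hi => ?_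
        have hi' : i ≤ N + 1 := by have := Finset.mem_range.1 hi; omega
        rw [pow_sub₀ _ hne hi', inv_pow]
        ring
      have hinv : ((y - x)⁻¹) ^ (N + 1) * (y - x) ^ (N + 1) = 1 := by
        rw [← mul_pow, inv_mul_cancel₀ hne, one_pow]
      rw [hsum, hy, Finset.sum_range_succ _ (N + 1)]
      linear_combination c (N + 1) y * hinv
    have hrec := ih fun x hx => by
      obtain ⟨G, hG, hGe⟩ := h x hx
      refine ⟨G, hG, ?_⟩
      filter_upwards [hGe, nhdsWithin_le_nhds (hΩ.eventually_mem hx)] with y hy hyΩ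
      rw [hy, Finset.sum_range_succ _ (N + 1), htop y hyΩ]
      ring
    refine ⟨hrec.1, fun i h1 h2 x hx => ?_⟩
    rcases Nat.lt_or_ge N i with hi | hi
    · obtain rfl : i = N + 1 := by omega
      exact htop x hx
    · exact hrec.2 i h1 hi x hx

lemma iteratedDeriv_log_sub (i : ℕ) (x y : ℝ) :
    iteratedDeriv (i + 1) (fun z => Real.log (z - x)) y
      = ((-1) ^ i * (i.factorial : ℝ)) * ((y - x)⁻¹) ^ (i + 1) := by
  rw [congrFun (iteratedDeriv_comp_sub_const (i + 1) Real.log x) y, iteratedDeriv_succ',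
    Real.deriv_log', iteratedDeriv_eq_iterate]
  have := iter_deriv_inv i (y - x)
  rw [show (Inv.inv : ℝ → ℝ) = fun z => z⁻¹ from rfl] at this
  rw [this, inv_pow, ← zpow_natCast (y - x), ← zpow_neg]
  congr 2
  push_cast
  ring

/-- The contribution of a differential operator in `log f` for `f = y - x`. -/
lemma sum_log_sub (a : ℕ → ℝ → ℝ) (n : ℕ) {x y : ℝ} (hxy : x < y) :
    (y - x) * ∑ i ∈ Finset.range (n + 1), a i y * iteratedDeriv i (fun z => Real.log (z - x)) y
      = a 0 y * ((y - x) * Real.log (y - x))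
        + ∑ i ∈ Finset.range n,
          ((-1) ^ i * (i.factorial : ℝ)) * a (i + 1) y * ((y - x)⁻¹) ^ i := by
  have hne : y - x ≠ 0 := (sub_pos.2 hxy).ne'
  rw [Finset.sum_range_succ', mul_add, Finset.mul_sum, add_comm]
  congr 1
  · simp only [iteratedDeriv_zero]
    ring
  · refine Finset.sum_congr rfl fun i _ => ?_
    rw [iteratedDeriv_log_sub, pow_succ]
    field_simp

lemma sum_range_eq_three (k : ℕ) (u : ℕ → ℝ) (hu : ∀ i, 3 ≤ i → i < k + 3 → u i = 0) :
    ∑ i ∈ Finset.range (k + 3), u i = u 0 + u 1 + u 2 := by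
  rw [← Finset.sum_subset (Finset.range_mono (by omega : 3 ≤ k + 3)) fun j hj hj' => hu j
    (by simpa using hj') (by simpa using hj)]
  simp [Finset.sum_range_succ]

/-- Near a point where `f` is positive, `f` is the exponential of a `C^k` function. -/
lemma exists_exp {k : ℕ} {Ω : Set ℝ} (hΩ : IsOpen Ω) {f : ℝ → ℝ} (hf : ContDiffOn ℝ k f Ω)
    {y : ℝ} (hy : y ∈ Ω) (hpos : 0 < f y) : ∃ φ : ℝ → ℝ, ContDiffOn ℝ k φ Ω ∧
      φ =ᶠ[𝓝 y] (fun z => Real.log (f z)) ∧ f =ᶠ[𝓝 y] (fun z => Real.exp (φ z)) := by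
  have hU : IsOpen (Ω ∩ f ⁻¹' Ioi 0) := hf.continuousOn.isOpen_inter_preimage hΩ isOpen_Ioi
  obtain ⟨χ, hχ, hχs, hχ1⟩ := exists_bump (hU.mem_nhds ⟨hy, hpos⟩)
  have hφ : (fun z => χ z * Real.log (f z)) =ᶠ[𝓝 y] fun z => Real.log (f z) := by
    filter_upwards [hχ1] with z hz
    rw [hz, one_mul]
  refine ⟨fun z => χ z * Real.log (f z), (contDiff_cutoff hU (hχ k) hχs ?_).contDiffOn, hφ, ?_⟩
  · exact (hf.mono inter_subset_left).log fun z hz => (ne_of_gt hz.2)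
  · filter_upwards [hφ, hU.mem_nhds ⟨hy, hpos⟩] with z hz hzU
    rw [hz, Real.exp_log hzU.2]

/-! ### Operators satisfying the Leibniz rule -/

/-- An operator from `C^k(Ω)` to `C(Ω)`, not assumed additive, that satisfies the Leibniz rule. -/
structure LeibnizOp (k : ℕ) (Ω : Set ℝ) (S : (ℝ → ℝ) → ℝ → ℝ) : Prop where
  cont : ∀ f, ContDiffOn ℝ k f Ω → ContinuousOn (S f) Ω
  mul : ∀ f g, ContDiffOn ℝ k f Ω → ContDiffOn ℝ k g Ω → ∀ x ∈ Ω,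
    S (fun y => f y * g y) x = f x * S g x + g x * S f x

lemma exists_cutoff_eq (k : ℕ) {f g : ℝ → ℝ} {x : ℝ} (h : f =ᶠ[𝓝 x] g) : ∃ χ : ℝ → ℝ,
    ContDiff ℝ k χ ∧ χ x = 1 ∧ (fun y => f y * χ y) = fun y => g y * χ y := by
  obtain ⟨χ, hχ, hχs, hχ1⟩ := exists_bump h
  refine ⟨χ, hχ k, hχ1.self_of_nhds, funext fun y => ?_⟩
  by_cases hy : y ∈ tsupport χ
  · rw [show f y = g y from hχs hy]
  · rw [image_eq_zero_of_notMem_tsupport hy, mul_zero, mul_zero]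

/-- Multiplying both functions by a cutoff supported where they agree shows locality. -/
lemma LeibnizOp.loc {k : ℕ} {Ω : Set ℝ} {S : (ℝ → ℝ) → ℝ → ℝ}
    (hS : LeibnizOp k Ω S) {f g : ℝ → ℝ} (hf : ContDiffOn ℝ k f Ω) (hg : ContDiffOn ℝ k g Ω)
    {x : ℝ} (hx : x ∈ Ω) (h : f =ᶠ[𝓝 x] g) : S f x = S g x := by
  obtain ⟨χ, hχ, hχ1, heq⟩ := exists_cutoff_eq k h
  have h1 := hS.mul f χ hf hχ.contDiffOn x hx
  have h2 := hS.mul g χ hg hχ.contDiffOn x hx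
  rw [heq, h2, h.self_of_nhds, hχ1] at h1
  linarith

/-- On positive functions, a Leibniz operator is a combination of `f log f` and `f'`:
`φ ↦ S (exp φ) / exp φ` is an additive local operator, and testing on `y - x` removes the terms of
order at least two. -/
lemma LeibnizOp.exists_coeff {k : ℕ} {Ω : Set ℝ} (hΩ : IsOpen Ω) {S : (ℝ → ℝ) → ℝ → ℝ}
    (hS : LeibnizOp k Ω S) : ∃ c d : ℝ → ℝ, ContinuousOn c Ω ∧ ContinuousOn d Ω ∧
      ∀ f, ContDiffOn ℝ k f Ω → ∀ y ∈ Ω, 0 < f y →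
        S f y = c y * (f y * Real.log (f y)) + d y * deriv f y := by
  have hA : LocalAdditive k Ω (fun φ y => S (fun z => Real.exp (φ z)) y / Real.exp (φ y)) := by
    refine ⟨fun f hf => ?_, fun f g hf hg x hx => ?_, fun f g hf hg x hx hfg => ?_⟩
    · exact (hS.cont _ hf.exp).div hf.exp.continuousOn fun _ _ => (Real.exp_pos _).ne'
    · have h1 := hS.mul _ _ hf.exp hg.exp x hx
      simp only [Real.exp_add]
      rw [h1]
      have := Real.exp_pos (f x)
      have := Real.exp_pos (g x)
      field_simp
      ring
    · have h1 : (fun z => Real.exp (f z)) =ᶠ[𝓝 x] fun z => Real.exp (g z) :=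
        hfg.fun_comp Real.exp
      rw [hS.loc hf.exp hg.exp hx h1, hfg.self_of_nhds]
  obtain ⟨a, ha, hak, hrep⟩ := hA.exists_coeff hΩ
  have hpos : ∀ f, ContDiffOn ℝ k f Ω → ∀ y ∈ Ω, 0 < f y → S f y
      = f y * ∑ i ∈ Finset.range (k + 3), a i y * iteratedDeriv i (fun z => Real.log (f z)) y := by
    intro f hf y hy hfy
    obtain ⟨φ, hφ, hφl, hφe⟩ := exists_exp hΩ hf hy hfy
    have h1 := hrep φ hφ y hy
    simp only [fun i => hφl.iteratedDeriv_eq i] at h1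
    rw [← h1, hS.loc hf hφ.exp hy hφe, hφe.self_of_nhds]
    have := Real.exp_pos (φ y)
    field_simp
  have htest := singular_terms_vanish hΩ (p := fun _ => 0) (b := a 0) (q := fun _ => 0)
    continuousOn_const (ha 0) continuousOn_const
    (fun i y => ((-1) ^ i * (i.factorial : ℝ)) * a (i + 1) y)
    (fun i => continuousOn_const.mul (ha (i + 1))) (k + 1) (fun x hx => by
      have hsx : ContDiffOn ℝ k (fun y => y - x) Ω := (contDiff_id.sub contDiff_const).contDiffOn
      refine ⟨S (fun y => y - x), (hS.cont _ hsx).continuousAt (hΩ.mem_nhds hx), ?_⟩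
      filter_upwards [nhdsWithin_le_nhds (hΩ.eventually_mem hx), self_mem_nhdsWithin] with y hy hxy
      rw [hpos _ hsx y hy (sub_pos.2 hxy), sum_log_sub a (k + 2) hxy]
      ring)
  have hhigh : ∀ i, 2 ≤ i → i < k + 3 → ∀ y ∈ Ω, a i y = 0 := by
    intro i h1 h2 y hy
    obtain ⟨j, rfl⟩ : ∃ j, i = j + 1 := ⟨i - 1, by omega⟩
    have := htest.2 j (by omega) (by omega) y hy
    have hκ : ((-1 : ℝ) ^ j * (j.factorial : ℝ)) ≠ 0 := by positivity
    exact (mul_eq_zero.1 this).resolve_left hκ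
  refine ⟨a 0, a 1, ha 0, ha 1, fun f hf y hy hfy => ?_⟩
  rw [hpos f hf y hy hfy, sum_range_eq_three k _ fun i h1 h2 => by
    rw [hhigh i (by omega) h2 y hy, zero_mul], hhigh 2 le_rfl (by omega) y hy]
  simp only [iteratedDeriv_zero, iteratedDeriv_one]
  rcases Nat.eq_zero_or_pos k with rfl | hk
  · rw [hak 1 (by omega)]
    simp only [Pi.zero_apply]
    ring
  · have hd : DifferentiableAt ℝ f y :=
      (hf.contDiffAt (hΩ.mem_nhds hy)).differentiableAt (by exact_mod_cast hk.ne')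
    rw [deriv.log hd hfy.ne']
    field_simp
    ring

/-! ### Operators satisfying the second-order identity -/

/-- The defect `D (f g) - f D g - g D f` of the Leibniz rule. -/
def leibnizDefect (D : (ℝ → ℝ) → ℝ → ℝ) (f g : ℝ → ℝ) (x : ℝ) : ℝ :=
  D (fun y => f y * g y) x - f x * D g x - g x * D f x

/-- The operators of the theorem: those from `C^k(Ω)` to `C(Ω)` satisfying identity (★). -/
structure SecondOrderOp (k : ℕ) (Ω : Set ℝ) (D : (ℝ → ℝ) → ℝ → ℝ) : Prop where
  cont : ∀ f, ContDiffOn ℝ k f Ω → ContinuousOn (D f) Ω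
  star : ∀ f g h : ℝ → ℝ,
      ContDiffOn ℝ k f Ω → ContDiffOn ℝ k g Ω → ContDiffOn ℝ k h Ω →
      ∀ x ∈ Ω,
        D (fun y => f y * g y * h y) x
          - f x * D (fun y => g y * h y) x
          - g x * D (fun y => f y * h y) x
          - h x * D (fun y => f y * g y) x
          + f x * g x * D h x
          + f x * h x * D g x
          + g x * h x * D f x = 0

lemma leibnizDefect_comm (D : (ℝ → ℝ) → ℝ → ℝ) (f g : ℝ → ℝ) (x : ℝ) :
    leibnizDefect D f g x = leibnizDefect D g f x := by
  simp only [leibnizDefect, mul_comm (f _) (g _)]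
  ring

section

variable {k : ℕ} {Ω : Set ℝ} {D : (ℝ → ℝ) → ℝ → ℝ}

/-- Identity (★) says exactly that the Leibniz defect is a derivation in each argument. -/
lemma SecondOrderOp.leibnizOp (hD : SecondOrderOp k Ω D) {h : ℝ → ℝ} (hh : ContDiffOn ℝ k h Ω) :
    LeibnizOp k Ω (fun f => leibnizDefect D f h) := by
  refine ⟨fun f hf => ?_, fun f g hf hg x hx => ?_⟩
  · exact ((hD.cont _ (hf.mul hh)).sub (hf.continuousOn.mul (hD.cont _ hh))).sub
      (hh.continuousOn.mul (hD.cont _ hf))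
  · have := hD.star f g h hf hg hh x hx
    simp only [leibnizDefect]
    linear_combination this

lemma SecondOrderOp.loc (hD : SecondOrderOp k Ω D) {f g : ℝ → ℝ} (hf : ContDiffOn ℝ k f Ω)
    (hg : ContDiffOn ℝ k g Ω) {x : ℝ} (hx : x ∈ Ω) (h : f =ᶠ[𝓝 x] g) : D f x = D g x := by
  obtain ⟨χ, hχ, hχ1, heq⟩ := exists_cutoff_eq k h
  have h1 := (hD.leibnizOp hχ.contDiffOn).loc hf hg hx h
  simp only [leibnizDefect] at h1
  rw [heq, h.self_of_nhds, hχ1] at h1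
  linarith

lemma SecondOrderOp.defect_loc (hD : SecondOrderOp k Ω D) {f g : ℝ → ℝ}
    (hf : ContDiffOn ℝ k f Ω) (hg : ContDiffOn ℝ k g Ω) {x : ℝ} (hx : x ∈ Ω)
    (h : f =ᶠ[𝓝 x] g) : leibnizDefect D f f x = leibnizDefect D g g x := by
  rw [(hD.leibnizOp hf).loc hf hg hx h, leibnizDefect_comm, (hD.leibnizOp hg).loc hf hg hx h]

/-- On positive functions, the defect is a bilinear form in `(f log f, f')` and `(h log h, h')`.
The coefficients of the derivation `leibnizDefect D · h`, recovered by testing on the constant `e`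
and on `exp`, are themselves Leibniz operators in `h`. -/
lemma SecondOrderOp.defect_formula (hΩ : IsOpen Ω) (hD : SecondOrderOp k Ω D) :
    ∃ α β γ δ : ℝ → ℝ, ContinuousOn α Ω ∧ ContinuousOn β Ω ∧ ContinuousOn γ Ω ∧
      ContinuousOn δ Ω ∧ ∀ f, ContDiffOn ℝ k f Ω → ∀ y ∈ Ω, 0 < f y →
        leibnizDefect D f f y = α y * (f y * Real.log (f y)) ^ 2
          + (β y + γ y) * (f y * Real.log (f y)) * deriv f y + δ y * deriv f y ^ 2 := by
  have he : ContDiffOn ℝ k (fun _ : ℝ => Real.exp 1) Ω := contDiffOn_const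
  have hexp : ContDiffOn ℝ k Real.exp Ω := Real.contDiff_exp.contDiffOn
  let C : (ℝ → ℝ) → ℝ → ℝ := fun h y => leibnizDefect D (fun _ => Real.exp 1) h y / Real.exp 1
  let E : (ℝ → ℝ) → ℝ → ℝ := fun h y => leibnizDefect D Real.exp h y / Real.exp y - C h y * y
  have hleft : ∀ {f : ℝ → ℝ}, ContDiffOn ℝ k f Ω → LeibnizOp k Ω (leibnizDefect D f) := by
    intro f hf
    have := hD.leibnizOp hf
    simpa only [fun g x => leibnizDefect_comm D g f x,
      show (fun g => leibnizDefect D g f) = leibnizDefect D f from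
        funext fun g => funext fun x => leibnizDefect_comm D g f x] using this
  have hC : LeibnizOp k Ω C := by
    refine ⟨fun h hh => ((hleft he).cont h hh).div_const _, fun f g hf hg x hx => ?_⟩
    simp only [C]
    rw [(hleft he).mul f g hf hg x hx]
    ring
  have hE : LeibnizOp k Ω E := by
    refine ⟨fun h hh => ?_, fun f g hf hg x hx => ?_⟩
    · exact (((hleft hexp).cont h hh).div Real.continuous_exp.continuousOn
        fun _ _ => (Real.exp_pos _).ne').sub ((hC.cont h hh).mul continuousOn_id)
    · simp only [E]
      rw [(hleft hexp).mul f g hf hg x hx, hC.mul f g hf hg x hx]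
      ring
  have hCE : ∀ f h, ContDiffOn ℝ k f Ω → ContDiffOn ℝ k h Ω → ∀ y ∈ Ω, 0 < f y →
      leibnizDefect D f h y = C h y * (f y * Real.log (f y)) + E h y * deriv f y := by
    intro f h hf hh y hy hfy
    obtain ⟨c, d, -, -, hcd⟩ := (hD.leibnizOp hh).exists_coeff hΩ
    have h1 : C h y = c y := by
      simp only [C]
      rw [hcd _ he y hy (Real.exp_pos 1), Real.log_exp, deriv_const]
      field_simp
      ring
    have h2 : E h y = d y := by
      simp only [E]
      rw [hcd _ hexp y hy (Real.exp_pos y), Real.log_exp, Real.deriv_exp, h1]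
      field_simp
      ring
    rw [h1, h2, hcd f hf y hy hfy]
  obtain ⟨α, β, hα, hβ, hαβ⟩ := hC.exists_coeff hΩ
  obtain ⟨γ, δ, hγ, hδ, hγδ⟩ := hE.exists_coeff hΩ
  refine ⟨α, β, γ, δ, hα, hβ, hγ, hδ, fun f hf y hy hfy => ?_⟩
  rw [hCE f f hf hf y hy hfy, hαβ f hf y hy hfy, hγδ f hf y hy hfy]
  ring

/-- Removing half of the quadratic part `leibnizDefect D f f` leaves, in logarithmic
coordinates, an additive local operator, hence a linear differential operator. -/
lemma SecondOrderOp.exists_coeff (hΩ : IsOpen Ω) (hD : SecondOrderOp k Ω D) :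
    ∃ a : ℕ → ℝ → ℝ, (∀ i, ContinuousOn (a i) Ω) ∧ (∀ i, k < i → a i = 0) ∧
      ∀ f, ContDiffOn ℝ k f Ω → ∀ y ∈ Ω, 0 < f y →
        D f y = f y * ∑ i ∈ Finset.range (k + 3),
            a i y * iteratedDeriv i (fun z => Real.log (f z)) y
          + leibnizDefect D f f y / (2 * f y) := by
  have hA : LocalAdditive k Ω (fun φ y => D (fun z => Real.exp (φ z)) y / Real.exp (φ y)
      - leibnizDefect D (fun z => Real.exp (φ z)) (fun z => Real.exp (φ z)) y
        / (2 * Real.exp (φ y) ^ 2)) := by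
    refine ⟨fun f hf => ?_, fun f g hf hg x hx => ?_, fun f g hf hg x hx hfg => ?_⟩
    · refine ((hD.cont _ hf.exp).div hf.exp.continuousOn fun _ _ => (Real.exp_pos _).ne').sub
        (((hD.leibnizOp hf.exp).cont _ hf.exp).div
          (continuousOn_const.mul (hf.exp.continuousOn.pow 2)) fun y _ => ?_)
      have := Real.exp_pos (f y)
      positivity
    · simp only [Real.exp_add]
      have hu := hf.exp
      have hv := hg.exp
      have hux := (Real.exp_pos (f x)).ne'
      have hvx := (Real.exp_pos (g x)).ne'
      set u : ℝ → ℝ := fun y => Real.exp (f y) with hudef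
      set v : ℝ → ℝ := fun y => Real.exp (g y) with hvdef
      -- the Leibniz rule in both arguments gives
      -- `Δ(uv, uv) = u² Δ(v, v) + 2 u v Δ(u, v) + v² Δ(u, u)`, whose cross term cancels the defect
      -- in `D (uv)`
      have h1 := (hD.leibnizOp (hu.mul hv)).mul u v hu hv x hx
      have h2 := (hD.leibnizOp hu).mul u v hu hv x hx
      have h3 := (hD.leibnizOp hv).mul u v hu hv x hx
      have h4 : D (fun y => u y * v y) x = leibnizDefect D u v x + u x * D v x + v x * D u x := by
        simp only [leibnizDefect]
        ring
      have h5 := leibnizDefect_comm D v u x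
      have h6 := leibnizDefect_comm D v (fun y => u y * v y) x
      have h7 := leibnizDefect_comm D u (fun y => u y * v y) x
      change u x ≠ 0 at hux
      change v x ≠ 0 at hvx
      change D (fun y => u y * v y) x / (u x * v x)
        - leibnizDefect D (fun y => u y * v y) (fun y => u y * v y) x / (2 * (u x * v x) ^ 2)
        = D u x / u x - leibnizDefect D u u x / (2 * u x ^ 2)
          + (D v x / v x - leibnizDefect D v v x / (2 * v x ^ 2))
      change leibnizDefect D (fun y => u y * v y) (fun y => u y * v y) x
        = u x * leibnizDefect D v (fun y => u y * v y) x
          + v x * leibnizDefect D u (fun y => u y * v y) x at h1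
      rw [h1, h6, h7, h2, h3, h4, h5]
      field_simp
      ring
    · have h1 : (fun z => Real.exp (f z)) =ᶠ[𝓝 x] fun z => Real.exp (g z) :=
        hfg.fun_comp Real.exp
      rw [hD.loc hf.exp hg.exp hx h1, hD.defect_loc hf.exp hg.exp hx h1, hfg.self_of_nhds]
  obtain ⟨a, ha, hak, hrep⟩ := hA.exists_coeff hΩ
  refine ⟨a, ha, hak, fun f hf y hy hfy => ?_⟩
  obtain ⟨φ, hφ, hφl, hφe⟩ := exists_exp hΩ hf hy hfy
  have h1 := hrep φ hφ y hy
  simp only [fun i => hφl.iteratedDeriv_eq i] at h1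
  rw [← h1, hD.loc hf hφ.exp hy hφe, hD.defect_loc hf hφ.exp hy hφe, hφe.self_of_nhds]
  have := Real.exp_pos (φ y)
  field_simp
  ring

lemma deriv_deriv_log {f : ℝ → ℝ} (hΩ : IsOpen Ω) (hf : ContDiffOn ℝ 2 f Ω) {y : ℝ} (hy : y ∈ Ω)
    (hfy : 0 < f y) : deriv (deriv fun z => Real.log (f z)) y
      = deriv (deriv f) y / f y - (deriv f y / f y) ^ 2 := by
  have hd : ∀ z ∈ Ω, DifferentiableAt ℝ f z := fun z hz =>
    (hf.contDiffAt (hΩ.mem_nhds hz)).differentiableAt (by norm_num)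
  have hf' : ContDiffOn ℝ 1 (deriv f) Ω := hf.deriv_of_isOpen hΩ (by norm_num)
  have hd' : DifferentiableAt ℝ (deriv f) y :=
    (hf'.contDiffAt (hΩ.mem_nhds hy)).differentiableAt (by norm_num)
  have hev : (deriv fun z => Real.log (f z)) =ᶠ[𝓝 y] fun z => deriv f z / f z := by
    filter_upwards [hΩ.mem_nhds hy, (hd y hy).continuousAt.eventually_ne hfy.ne'] with z hz hz0
    exact deriv.log (hd z hz) hz0
  rw [hev.deriv_eq, deriv_fun_div hd' (hd y hy) hfy.ne']
  field_simp

/-- The formula at points where the function is positive. Testing on `y - x` removes the terms of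
order at least three, the mixed quadratic term, and the combination of `(log f)''` and `(f' / f)²`
other than `f'' / f`. -/
lemma SecondOrderOp.formula_pos (hΩ : IsOpen Ω) (hD : SecondOrderOp k Ω D) :
    ∃ c₀ c₁ c₂ d₀₀ : ℝ → ℝ,
      ContinuousOn c₀ Ω ∧ ContinuousOn c₁ Ω ∧ ContinuousOn c₂ Ω ∧ ContinuousOn d₀₀ Ω ∧
      (∀ f : ℝ → ℝ, ContDiffOn ℝ k f Ω → ∀ y ∈ Ω, 0 < f y →
        D f y = c₀ y * f y * Real.log (f y) + c₁ y * deriv f y + c₂ y * deriv (deriv f) y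
          + d₀₀ y * f y * (Real.log (f y)) ^ 2) ∧
      (k < 1 → c₁ = 0) ∧ (k < 2 → c₂ = 0) := by
  obtain ⟨a, ha, hak, hrep⟩ := hD.exists_coeff hΩ
  obtain ⟨α, β, γ, δ, hα, hβ, hγ, hδ, hdef⟩ := hD.defect_formula hΩ
  have htest := singular_terms_vanish hΩ (p := fun y => α y / 2) (b := a 0)
    (q := fun y => (β y + γ y) / 2)
    (hα.div_const 2) (ha 0) ((hβ.add hγ).div_const 2)
    (fun i y => ((-1) ^ i * (i.factorial : ℝ)) * a (i + 1) y + if i = 1 then δ y / 2 else 0)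
    (fun i => (continuousOn_const.mul (ha (i + 1))).add (by
      by_cases hi : i = 1
      · simpa [hi] using hδ.div_const 2
      · simpa [hi] using continuousOn_const))
    (k + 1) (fun x hx => by
      have hsx : ContDiffOn ℝ k (fun y => y - x) Ω := (contDiff_id.sub contDiff_const).contDiffOn
      refine ⟨D (fun y => y - x), (hD.cont _ hsx).continuousAt (hΩ.mem_nhds hx), ?_⟩
      filter_upwards [nhdsWithin_le_nhds (hΩ.eventually_mem hx), self_mem_nhdsWithin] with y hy hxy
      have hpos : 0 < y - x := sub_pos.2 hxy
      have hsum : ∑ i ∈ Finset.range (k + 1 + 1),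
          (if i = 1 then δ y / 2 else 0) * ((y - x)⁻¹) ^ i = δ y / 2 * (y - x)⁻¹ := by
        rw [Finset.sum_eq_single 1]
        · simp
        · intro j _ hj
          simp [hj]
        · intro h
          exact absurd (Finset.mem_range.2 (by omega)) h
      have hder : deriv (fun y => y - x) y = 1 := by simp
      simp only [add_mul _ (ite _ _ _), Finset.sum_add_distrib]
      rw [hrep _ hsx y hy hpos, hdef _ hsx y hy hpos, sum_log_sub a (k + 2) hxy, hder, hsum]
      field_simp
      ring)
  have hhigh : ∀ i, 3 ≤ i → i < k + 3 → ∀ y ∈ Ω, a i y = 0 := by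
    intro i h1 h2 y hy
    obtain ⟨j, rfl⟩ : ∃ j, i = j + 1 := ⟨i - 1, by omega⟩
    have := htest.2 j (by omega) (by omega) y hy
    rw [if_neg (by omega), add_zero] at this
    have hκ : ((-1 : ℝ) ^ j * (j.factorial : ℝ)) ≠ 0 := by positivity
    exact (mul_eq_zero.1 this).resolve_left hκ
  have hδa : ∀ y ∈ Ω, δ y = 2 * a 2 y := by
    intro y hy
    have := htest.2 1 le_rfl (by omega) y hy
    norm_num at this
    linarith
  have hβγ : ∀ y ∈ Ω, β y + γ y = 0 := by
    intro y hy
    have := htest.1 y hy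
    linarith
  refine ⟨a 0, a 1, a 2, fun y => α y / 2, ha 0, ha 1, ha 2, hα.div_const 2,
    fun f hf y hy hfy => ?_, hak 1, hak 2⟩
  rw [hrep f hf y hy hfy, hdef f hf y hy hfy, hβγ y hy, hδa y hy,
    sum_range_eq_three k _ fun i h1 h2 => by rw [hhigh i h1 h2 y hy, zero_mul]]
  simp only [iteratedDeriv_zero, iteratedDeriv_one, iteratedDeriv_succ (n := 1)]
  rcases Nat.lt_or_ge k 1 with hk | hk
  · rw [hak 1 hk, hak 2 (by omega)]
    simp only [Pi.zero_apply]
    field_simp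
    ring
  have hd : DifferentiableAt ℝ f y :=
    (hf.contDiffAt (hΩ.mem_nhds hy)).differentiableAt (by exact_mod_cast (by omega : k ≠ 0))
  rw [deriv.log hd hfy.ne']
  rcases Nat.lt_or_ge k 2 with hk2 | hk2
  · rw [hak 2 hk2]
    simp only [Pi.zero_apply]
    field_simp
    ring
  · rw [deriv_deriv_log hΩ (hf.of_le (by exact_mod_cast hk2)) hy hfy]
    field_simp
    ring

lemma SecondOrderOp.neg (hD : SecondOrderOp k Ω D) {f : ℝ → ℝ} (hf : ContDiffOn ℝ k f Ω) {x : ℝ}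
    (hx : x ∈ Ω) : D (fun y => -f y) x = -D f x := by
  have hone : ContDiffOn ℝ k (fun _ : ℝ => (1 : ℝ)) Ω := contDiffOn_const
  have hneg : ContDiffOn ℝ k (fun _ : ℝ => (-1 : ℝ)) Ω := contDiffOn_const
  have h1 := hD.star _ _ _ hone hone hone x hx
  have h2 := hD.star _ _ _ hneg hneg hneg x hx
  have h3 := hD.star _ _ _ hneg hneg hf x hx
  norm_num at h1 h2 h3
  rw [h1] at h2 h3
  have h4 : D (fun _ => -1) x = 0 := by linarith
  rw [h4] at h3
  change D f x + _ + _ - _ + _ + _ + _ = 0 at h3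
  linarith

end

/-! ### The general formula -/


/-- (Main theorem.) If `D : C^k(Ω) → C(Ω)` satisfies the identity (★), then
there are continuous functions `c₀, c₁, c₂, d₀₀` on `Ω` such that
`D(f)(x) = c₀(x)·f(x)·ln|f(x)| + c₁(x)·f'(x) + c₂(x)·f''(x) + d₀₀(x)·f(x)·(ln|f(x)|)²`
for all `f ∈ C^k(Ω)` and `x ∈ Ω` (the conventions `0·ln 0 = 0`, `0·(ln 0)² = 0` hold
automatically since `Real.log 0 = 0`).  Moreover, for `k = 0` the conclusion holds with
`c₁ = c₂ = 0`, and for `k = 1` with `c₂ = 0`.  (The statement is formulated for every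
nonnegative integer `k`, the clauses for `k = 0` and `k = 1` being recorded as implications.) -/
theorem statement11 (k : ℕ) (Ω : Set ℝ) (hΩ : IsOpen Ω) (hΩne : Ω.Nonempty)
    (D : (ℝ → ℝ) → (ℝ → ℝ))
    (hmap : ∀ f : ℝ → ℝ, ContDiffOn ℝ k f Ω → ContinuousOn (D f) Ω)
    (hstar : ∀ f g h : ℝ → ℝ,
      ContDiffOn ℝ k f Ω → ContDiffOn ℝ k g Ω → ContDiffOn ℝ k h Ω →
      ∀ x ∈ Ω,
        D (fun y => f y * g y * h y) x
          - f x * D (fun y => g y * h y) x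
          - g x * D (fun y => f y * h y) x
          - h x * D (fun y => f y * g y) x
          + f x * g x * D h x
          + f x * h x * D g x
          + g x * h x * D f x = 0) :
    ∃ c₀ c₁ c₂ d₀₀ : ℝ → ℝ,
      ContinuousOn c₀ Ω ∧ ContinuousOn c₁ Ω ∧ ContinuousOn c₂ Ω ∧ ContinuousOn d₀₀ Ω ∧
      (∀ f : ℝ → ℝ, ContDiffOn ℝ k f Ω → ∀ x ∈ Ω,
        D f x = c₀ x * f x * Real.log |f x| + c₁ x * deriv f x + c₂ x * deriv (deriv f) x
          + d₀₀ x * f x * (Real.log |f x|) ^ 2) ∧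
      (k = 0 → c₁ = 0 ∧ c₂ = 0) ∧
      (k = 1 → c₂ = 0) := by
  obtain ⟨c₀, c₁, c₂, d₀₀, hc₀, hc₁, hc₂, hd₀₀, hpos, hk1, hk2⟩ :=
    SecondOrderOp.formula_pos hΩ ⟨hmap, hstar⟩
  have hD : SecondOrderOp k Ω D := ⟨hmap, hstar⟩
  refine ⟨c₀, c₁, c₂, d₀₀, hc₀, hc₁, hc₂, hd₀₀, fun f hf x hx => ?_,
    fun hk => ⟨hk1 (by omega), hk2 (by omega)⟩, fun hk => hk2 (by omega)⟩
  simp only [Real.log_abs]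
  have hne : ∀ y ∈ Ω, f y ≠ 0 → D f y = c₀ y * f y * Real.log (f y) + c₁ y * deriv f y
      + c₂ y * deriv (deriv f) y + d₀₀ y * f y * (Real.log (f y)) ^ 2 := by
    intro y hy hfy
    rcases lt_or_gt_of_ne hfy with h | h
    · have h1 := hpos _ hf.neg y hy (neg_pos.2 h)
      have hder : deriv (fun y => -f y) = fun y => -deriv f y := funext fun y => deriv.fun_neg
      have hder2 : deriv (fun y => -deriv f y) y = -deriv (deriv f) y := deriv.fun_neg
      change D (fun y => -f y) y = c₀ y * (-f y) * Real.log (-f y)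
        + c₁ y * deriv (fun y => -f y) y + c₂ y * deriv (deriv (fun y => -f y)) y
        + d₀₀ y * (-f y) * (Real.log (-f y)) ^ 2 at h1
      rw [hD.neg hf hy, Real.log_neg_eq_log, hder, hder2] at h1
      linarith
    · exact hpos f hf y hy h
  by_cases hcl : x ∈ closure {y | f y ≠ 0}
  · -- both sides are continuous and agree at points near `x` where `f` does not vanish
    have hterm1 : ContinuousOn (fun y => c₁ y * deriv f y) Ω := by
      rcases Nat.lt_or_ge k 1 with hk | hk
      · simpa [hk1 hk] using continuousOn_const
      · exact hc₁.mul (hf.continuousOn_deriv_of_isOpen hΩ (by exact_mod_cast hk))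
    have hterm2 : ContinuousOn (fun y => c₂ y * deriv (deriv f) y) Ω := by
      rcases Nat.lt_or_ge k 2 with hk | hk
      · simpa [hk2 hk] using continuousOn_const
      · have hf' : ContDiffOn ℝ 1 (deriv f) Ω :=
          (hf.of_le (by exact_mod_cast hk : (2 : WithTop ℕ∞) ≤ k)).deriv_of_isOpen hΩ
            (by norm_num)
        exact hc₂.mul (hf'.continuousOn_deriv_of_isOpen hΩ le_rfl)
    have hR : ContinuousOn (fun y => c₀ y * f y * Real.log (f y) + c₁ y * deriv f y
        + c₂ y * deriv (deriv f) y + d₀₀ y * f y * (Real.log (f y)) ^ 2) Ω := by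
      simp only [mul_assoc]
      exact (((hc₀.mul (Real.continuous_mul_log.comp_continuousOn hf.continuousOn)).add
        hterm1).add hterm2).add
          (hd₀₀.mul (continuous_mul_log_sq.comp_continuousOn hf.continuousOn))
    have hnb : (𝓝[{y | f y ≠ 0}] x).NeBot := mem_closure_iff_nhdsWithin_neBot.1 hcl
    have hl := ((hmap f hf).continuousAt (hΩ.mem_nhds hx)).tendsto.mono_left
      (nhdsWithin_le_nhds (s := {y | f y ≠ 0}))
    have hr := (hR.continuousAt (hΩ.mem_nhds hx)).tendsto.mono_left
      (nhdsWithin_le_nhds (s := {y | f y ≠ 0}))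
    refine tendsto_nhds_unique hl (hr.congr' ?_)
    filter_upwards [nhdsWithin_le_nhds (hΩ.eventually_mem hx), self_mem_nhdsWithin] with y hy hy0
    exact (hne y hy hy0).symm
  · have hzero : f =ᶠ[𝓝 x] fun _ => 0 := by
      filter_upwards [isClosed_closure.isOpen_compl.mem_nhds hcl] with y hy
      by_contra h
      exact hy (subset_closure h)
    have hz : ContDiffOn ℝ k (fun _ : ℝ => (0 : ℝ)) Ω := contDiffOn_const
    have hD0 := hD.star _ _ _ hz hz hz x hx
    norm_num at hD0
    have hd : deriv f =ᶠ[𝓝 x] deriv fun _ => 0 := hzero.deriv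
    rw [hD.loc hf hz hx hzero, hD0, hd.deriv_eq, hd.self_of_nhds, hzero.self_of_nhds]
    simp
end

section
/- Let k be a nonnegative integer, Ω ⊆ ℝ a nonempty open set, and D : C^k(Ω) → C(Ω) an operator satisfying the identity (★): D(f·g·h) − f·D(g·h) − g·D(f·h) − h·D(f·g) + f·g·D(h) + f·h·D(g) + g·h·D(f) = 0 for all f, g, h ∈ C^k(Ω). Then there exist continuous functions c_i, d_{ij} : Ω → ℝ for i, j = 0, …, k such that for every strictly positive f ∈ C^k(Ω) and all x ∈ Ω: D(f)(x) = f(x)·[ Σ_{i=0}^{k} c_i(x)·(ln∘f)^{(i)}(x) + Σ_{i=0}^{k} Σ_{j=0}^{k} d_{ij}(x)·(ln∘f)^{(i)}(x)·(ln∘f)^{(j)}(x) ], where (ln∘f)^{(i)} denotes the i-th derivative of ln∘f and (ln∘f)^{(0)} = ln∘f. -/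
/-!
The identity says that, after the substitution `f = e^a`, the operator `T a = e^{-a} D(e^a)` has
vanishing third difference. Hence its polarization `B(a, b) = T(a + b) - T a - T b` is symmetric
and biadditive, and `T a = L a + B(a, a) / 2` with `L` additive. Applying the identity to `f` and
two nested cut-off functions shows that `D f x` depends only on the germ of `f` at `x`
(`IsSecondOrder.germ`), so `L` and each `B(·, b)` are local additive operators with continuous
values. The theorem follows once such an operator `A` is shown to be a differential operator of
order at most `k` with continuous coefficients (`LocalAdditive.eq_sum`); for `B` this is used in
each variable.

No continuity of `A` in its argument is assumed; the continuity of the functions `A a` replaces it.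

* If the `k`-jet of `a` at `x` vanishes, replacing `a` by zero to the left of `x` gives a `C^k`
  function `h`. By locality `A h` is `0` on the left and `A a` on the right, so `A a x = 0`
  (`LocalAdditive.eq_zero_of_flat`). Thus `A a x` depends only on the `k`-jet of `a` at `x`.
* If `A (t p) x₀ ≠ t A p x₀` for a smooth `p`, the same holds at all points near `x₀`. An additive
  function on the line that is bounded near the origin is linear, so for points `xₙ → x₀` there are
  arbitrarily small `tₙ` with `|A (tₙ p) xₙ| > n`. The sum of `tₙ p` cut off near `xₙ` is `C^k`, and
  its image under `A` is unbounded along `xₙ`, which contradicts continuity at `x₀`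
  (`LocalAdditive.smul_smooth`).

Replacing `a` by its Taylor polynomial at `x` and expanding by linearity gives the coefficients, and
expansion in monomials shows that they are continuous in `x`.
-/

open scoped BigOperators


section

open Filter Topology

/-! ### Local additive operators are differential operators -/

/-- An operator on functions that maps `C^k(Ω)` to continuous functions on `Ω`, is additive on
`C^k(Ω)`, and whose value at a point of `Ω` depends only on the germ of its argument there.
Functions on `Ω` are encoded by functions on `ℝ` with unconstrained values off `Ω`. -/
structure LocalAdditive_s13 (k : ℕ) (Ω : Set ℝ) (A : (ℝ → ℝ) → (ℝ → ℝ)) : Prop where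
  cont : ∀ a, ContDiffOn ℝ k a Ω → ContinuousOn (A a) Ω
  add : ∀ a b, ContDiffOn ℝ k a Ω → ContDiffOn ℝ k b Ω → ∀ x ∈ Ω, A (a + b) x = A a x + A b x
  germ : ∀ a b, ContDiffOn ℝ k a Ω → ContDiffOn ℝ k b Ω → ∀ x ∈ Ω, a =ᶠ[𝓝 x] b → A a x = A b x

/-- A function that is `k`-flat at `x` may be replaced by zero on the left of `x` without losing
`C^k` regularity. -/
lemma contDiffOn_indicator_Ioi {Ω : Set ℝ} (hΩ : IsOpen Ω) (x : ℝ) (hx : x ∈ Ω) (k : ℕ) :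
    ∀ f : ℝ → ℝ, ContDiffOn ℝ k f Ω → (∀ i ≤ k, iteratedDeriv i f x = 0) →
      ContDiffOn ℝ k ((Set.Ioi x).indicator f) Ω := by
  have hright : ∀ (f : ℝ → ℝ) (y : ℝ), x < y → (Set.Ioi x).indicator f =ᶠ[𝓝 y] f := by
    intro f y hy
    filter_upwards [Ioi_mem_nhds hy] with z hz
    exact Set.indicator_of_mem hz f
  have hleft : ∀ (f : ℝ → ℝ) (y : ℝ), y < x → (Set.Ioi x).indicator f =ᶠ[𝓝 y] fun _ => 0 := by
    intro f y hy
    filter_upwards [Iio_mem_nhds hy] with z hz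
    exact Set.indicator_of_notMem (by simpa using le_of_lt hz) f
  have hle : ∀ (f : ℝ → ℝ) (y : ℝ), ‖(Set.Ioi x).indicator f y‖ ≤ ‖f y‖ :=
    fun f y => norm_indicator_le_norm_self f y
  induction k with
  | zero =>
    intro f hf h0
    have hfx : f x = 0 := by simpa using h0 0 le_rfl
    have hf : ContinuousOn f Ω := hf.continuousOn
    refine contDiffOn_zero.2 fun y hy => ContinuousAt.continuousWithinAt ?_
    have hfy : ContinuousAt f y := hf.continuousAt (hΩ.mem_nhds hy)
    rcases lt_trichotomy y x with h | rfl | h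
    · exact continuousAt_const.congr (hleft f y h).symm
    · have h1 : Tendsto f (𝓝 y) (𝓝 0) := by simpa [ContinuousAt, hfx] using hfy
      have h2 : (Set.Ioi y).indicator f y = 0 := by simp
      rw [ContinuousAt, h2]
      exact squeeze_zero_norm (hle f) (by simpa using h1.norm)
    · exact hfy.congr (hright f y h).symm
  | succ k ih =>
    intro f hf h0
    have hfx : f x = 0 := by simpa using h0 0 (by omega)
    have hf'x : deriv f x = 0 := by simpa [iteratedDeriv_one] using h0 1 (by omega)
    push_cast at hf ⊢
    rw [contDiffOn_succ_iff_deriv_of_isOpen hΩ] at hf ⊢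
    obtain ⟨hd, -, hc⟩ := hf
    have hder : ∀ y ∈ Ω, HasDerivAt ((Set.Ioi x).indicator f)
        ((Set.Ioi x).indicator (deriv f) y) y := by
      intro y hy
      have hfy : HasDerivAt f (deriv f y) y := (hd.differentiableAt (hΩ.mem_nhds hy)).hasDerivAt
      rcases lt_trichotomy y x with h | rfl | h
      · rw [(hleft (deriv f) y h).eq_of_nhds]
        exact (hasDerivAt_const y (0 : ℝ)).congr_of_eventuallyEq (hleft f y h)
      · have h2 : ∀ g : ℝ → ℝ, (Set.Ioi y).indicator g y = 0 := by simp
        rw [h2]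
        rw [hf'x, hasDerivAt_iff_isLittleO] at hfy
        rw [hasDerivAt_iff_isLittleO]
        simp only [hfx, h2, smul_zero, sub_zero] at hfy ⊢
        exact (Asymptotics.isBigO_of_le _ (hle f)).trans_isLittleO hfy
      · rw [(hright (deriv f) y h).eq_of_nhds]
        exact hfy.congr_of_eventuallyEq (hright f y h)
    refine ⟨fun y hy => (hder y hy).differentiableAt.differentiableWithinAt, by simp, ?_⟩
    refine (ih (deriv f) hc fun i hi => ?_).congr fun y hy => (hder y hy).deriv
    rw [← iteratedDeriv_succ']
    exact h0 (i + 1) (by omega)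

/-- An additive map of the line that is bounded near the origin is linear. -/
lemma linear_of_bounded (φ : ℝ →+ ℝ) (δ M : ℝ) (hδ : 0 < δ) (h : ∀ t, |t| < δ → |φ t| ≤ M) (t : ℝ) :
    φ t = t * φ 1 := by
  have hc : Continuous φ := by
    refine φ.continuous_of_isBounded_nhds_zero (Metric.ball_mem_nhds 0 hδ) ?_
    refine (Metric.isBounded_closedBall (x := (0 : ℝ)) (r := M)).subset ?_
    rintro _ ⟨t, ht, rfl⟩
    simpa using h t (by simpa using ht)
  simpa using map_real_smul φ hc t 1

namespace LocalAdditive_s13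

variable {k : ℕ} {Ω : Set ℝ} {A : (ℝ → ℝ) → (ℝ → ℝ)}

lemma zero (hA : LocalAdditive_s13 k Ω A) {x : ℝ} (hx : x ∈ Ω) : A 0 x = 0 := by
  have h0 : ContDiffOn ℝ k (0 : ℝ → ℝ) Ω := contDiffOn_const
  simpa using hA.add 0 0 h0 h0 x hx

/-- A `k`-flat argument is glued to zero; continuity of the image of the glued function forces
the value at the junction to vanish. -/
lemma eq_zero_of_flat (hΩ : IsOpen Ω) (hA : LocalAdditive_s13 k Ω A) {a : ℝ → ℝ}
    (ha : ContDiffOn ℝ k a Ω) {x : ℝ} (hx : x ∈ Ω) (h0 : ∀ i ≤ k, iteratedDeriv i a x = 0) :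
    A a x = 0 := by
  set h := (Set.Ioi x).indicator a with hdef
  have hh : ContDiffOn ℝ k h Ω := contDiffOn_indicator_Ioi hΩ x hx k a ha h0
  have hz : ContDiffOn ℝ k (0 : ℝ → ℝ) Ω := contDiffOn_const
  have hΩx := hΩ.mem_nhds hx
  have hc : Tendsto (A h) (𝓝 x) (𝓝 (A h x)) := (hA.cont h hh).continuousAt hΩx
  have hca : Tendsto (A a) (𝓝 x) (𝓝 (A a x)) := (hA.cont a ha).continuousAt hΩx
  have hl : A h x = 0 := by
    refine tendsto_nhds_unique (hc.mono_left (nhdsWithin_le_nhds (s := Set.Iio x)))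
      (tendsto_const_nhds.congr' ?_)
    filter_upwards [self_mem_nhdsWithin, nhdsWithin_le_nhds hΩx] with y hy hyΩ
    rw [← hA.zero hyΩ]
    refine (hA.germ h 0 hh hz y hyΩ ?_).symm
    filter_upwards [Iio_mem_nhds hy] with z hz
    exact Set.indicator_of_notMem (by simpa using le_of_lt hz) a
  rw [← hl]
  refine tendsto_nhds_unique (hca.mono_left (nhdsWithin_le_nhds (s := Set.Ioi x)))
    ((hc.mono_left nhdsWithin_le_nhds).congr' ?_)
  filter_upwards [self_mem_nhdsWithin, nhdsWithin_le_nhds hΩx] with y hy hyΩ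
  refine hA.germ h a hh ha y hyΩ ?_
  filter_upwards [Ioi_mem_nhds hy] with z hz
  exact Set.indicator_of_mem hz a

/-- Homogeneity on smooth functions. If it fails at `x₀`, it fails at every point near `x₀`, and
at each of those points `t ↦ A (t • p)` is unbounded near `t = 0`. Summing tiny multiples of `p`,
cut off around points `xₙ → x₀`, then gives a `C^k` function whose image is unbounded along `xₙ`. -/
lemma smul_smooth (hΩ : IsOpen Ω) (hA : LocalAdditive_s13 k Ω A) {p : ℝ → ℝ} (hp : ContDiff ℝ k p)
    {x₀ : ℝ} (hx₀ : x₀ ∈ Ω) (t : ℝ) : A (t • p) x₀ = t * A p x₀ := by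
  by_contra hne
  have hsp : ∀ s : ℝ, ContDiffOn ℝ k (s • p) Ω := fun s => (contDiff_const.smul hp).contDiffOn
  have hev : ∀ᶠ y in 𝓝 x₀, y ∈ Ω ∧ A (t • p) y ≠ t * A p y := by
    refine (hΩ.eventually_mem hx₀).and ?_
    have h1 : ContinuousAt (A (t • p)) x₀ := (hA.cont _ (hsp t)).continuousAt (hΩ.mem_nhds hx₀)
    have h2 : ContinuousAt (A p) x₀ :=
      (hA.cont _ hp.contDiffOn).continuousAt (hΩ.mem_nhds hx₀)
    exact ((h1.sub (h2.const_mul t)).eventually_ne (sub_ne_zero.2 hne)).mono fun y => sub_ne_zero.1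
  obtain ⟨δ, hδ, hball⟩ := Metric.eventually_nhds_iff_ball.1 hev
  set r : ℕ → ℝ := fun n => δ / 2 ^ (n + 1) with hr
  have hrpos : ∀ n, 0 < r n := fun n => by positivity
  have hrlt : ∀ n, r n < δ := fun n => by
    rw [hr]
    exact div_lt_self hδ (one_lt_pow₀ (by norm_num) (by omega))
  have hrhalf : ∀ m n, m < n → r n ≤ r m / 2 := fun m n hmn => by
    simp only [hr]
    rw [div_div, ← pow_succ]
    exact div_le_div_of_nonneg_left hδ.le (by positivity)
      (pow_le_pow_right₀ (by norm_num) (by omega))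
  set x : ℕ → ℝ := fun n => x₀ + r n with hx
  have hxball : ∀ n, x n ∈ Metric.ball x₀ δ := fun n => by
    simp [hx, abs_of_pos (hrpos n), hrlt n]
  have hxΩ : ∀ n, x n ∈ Ω := fun n => (hball _ (hxball n)).1
  have hxlim : Tendsto x atTop (𝓝 x₀) := by
    have h1 : Tendsto (fun n : ℕ => (2 : ℝ) ^ (n + 1)) atTop atTop :=
      (tendsto_pow_atTop_atTop_of_one_lt (by norm_num)).comp (tendsto_add_atTop_nat 1)
    simpa [hx, hr] using (h1.const_div_atTop δ).const_add x₀
  let ψ : ∀ n, ContDiffBump (x n) := fun n =>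
    ⟨r n / 8, r n / 4, by have := hrpos n; positivity, by have := hrpos n; linarith⟩
  set u : ℕ → ℝ → ℝ := fun n y => ψ n y * p y with hu
  have husm : ∀ n, ContDiff ℝ k (u n) := fun n => (ψ n).contDiff.mul hp
  have hucs : ∀ n, HasCompactSupport (u n) := fun n => (ψ n).hasCompactSupport.mul_right
  have hC : ∀ n, ∃ C : ℝ, 0 < C ∧ ∀ i ≤ k, ∀ y, ‖iteratedFDeriv ℝ i (u n) y‖ ≤ C := by
    intro n
    have h1 : ∀ i : ℕ, ∃ c : ℝ, i ≤ k → ∀ y, ‖iteratedFDeriv ℝ i (u n) y‖ ≤ c := by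
      intro i
      by_cases hi : i ≤ k
      · obtain ⟨c, hc⟩ := ((hucs n).iteratedFDeriv i).exists_bound_of_continuous
          ((husm n).continuous_iteratedFDeriv (by exact_mod_cast hi))
        exact ⟨c, fun _ => hc⟩
      · exact ⟨0, fun h => absurd h hi⟩
    choose c hc using h1
    refine ⟨1 + ∑ i ∈ Finset.range (k + 1), |c i|, by positivity, fun i hi y => ?_⟩
    have h2 : |c i| ≤ ∑ i ∈ Finset.range (k + 1), |c i| :=
      Finset.single_le_sum (f := fun i => |c i|) (fun _ _ => abs_nonneg _)
        (Finset.mem_range.2 (by omega))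
    linarith [hc i hi y, le_abs_self (c i)]
  choose C hCpos hCb using hC
  have hs : ∀ n : ℕ, ∃ s : ℝ, |s| * C n ≤ (1 / 2) ^ n ∧ (n : ℝ) < |A (s • p) (x n)| := by
    intro n
    by_contra! hcon
    let φ : ℝ →+ ℝ := AddMonoidHom.mk' (fun s => A (s • p) (x n)) fun s s' => by
      rw [add_smul, hA.add _ _ (hsp s) (hsp s') _ (hxΩ n)]
    have hlin := linear_of_bounded φ ((1 / 2) ^ n / C n) n (div_pos (by positivity) (hCpos n))
      (fun s hs => hcon s ((lt_div_iff₀ (hCpos n)).1 hs).le) t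
    refine (hball _ (hxball n)).2 ?_
    simpa [φ] using hlin
  choose s hsC hsA using hs
  have hasm : ContDiff ℝ k (fun y => ∑' n, (s n • u n) y) := by
    refine contDiff_tsum (N := (k : ℕ∞)) (v := fun _ n => (1 / 2 : ℝ) ^ n)
      (fun n => contDiff_const.smul (husm n)) (fun _ _ => summable_geometric_two) ?_
    intro i n y hi
    have hi : i ≤ k := by exact_mod_cast hi
    rw [iteratedFDeriv_const_smul_apply ((husm n).of_le (by exact_mod_cast hi)).contDiffAt,
      norm_smul, Real.norm_eq_abs]
    exact (mul_le_mul_of_nonneg_left (hCb n i hi y) (abs_nonneg _)).trans (hsC n)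
  set a : ℝ → ℝ := fun y => ∑' n, (s n • u n) y with ha
  have hgerm : ∀ n, a =ᶠ[𝓝 (x n)] s n • p := by
    intro n
    filter_upwards [Metric.closedBall_mem_nhds (x n) (ψ n).rIn_pos] with y hy
    have h1 : ψ n y = 1 := (ψ n).one_of_mem_closedBall hy
    have hyd : |y - x n| ≤ r n / 8 := by simpa [Real.dist_eq] using hy
    have h0 : ∀ m, m ≠ n → (s m • u m) y = 0 := by
      intro m hmn
      have : ψ m y = 0 := by
        refine (ψ m).zero_of_le_dist ?_
        change r m / 4 ≤ |y - x m|
        simp only [hx] at hyd ⊢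
        have := hrpos m
        have := hrpos n
        rw [abs_le] at hyd
        rw [le_abs]
        rcases lt_or_gt_of_ne hmn with h | h
        · right; linarith [hrhalf _ _ h]
        · left; linarith [hrhalf _ _ h]
      simp [hu, this]
    simp only [ha]
    rw [tsum_eq_single n h0]
    simp [hu, h1]
  have hlim : Tendsto (fun n => |A a (x n)|) atTop (𝓝 |A a x₀|) :=
    ((((hA.cont a hasm.contDiffOn).continuousAt (hΩ.mem_nhds hx₀)).tendsto).comp hxlim).abs
  refine not_tendsto_nhds_of_tendsto_atTop (tendsto_atTop_mono (fun n => ?_)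
    tendsto_natCast_atTop_atTop) _ hlim
  rw [hA.germ a _ hasm.contDiffOn (hsp (s n)) _ (hxΩ n) (hgerm n)]
  exact (hsA n).le

lemma sum_smooth (hΩ : IsOpen Ω) (hA : LocalAdditive_s13 k Ω A) {x : ℝ} (hx : x ∈ Ω) (S : Finset ℕ)
    (w : ℕ → ℝ) (p : ℕ → ℝ → ℝ) (hp : ∀ i, ContDiff ℝ k (p i)) :
    A (∑ i ∈ S, w i • p i) x = ∑ i ∈ S, w i * A (p i) x := by
  induction S using Finset.induction_on with
  | empty => simpa using hA.zero hx
  | insert i S hi ih =>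
    rw [Finset.sum_insert hi, Finset.sum_insert hi, hA.add _ _ _ _ _ hx, ih,
      hA.smul_smooth hΩ (hp i) hx]
    · exact (contDiff_const.smul (hp i)).contDiffOn
    · rw [show (∑ i ∈ S, w i • p i) = fun y => ∑ i ∈ S, (w i • p i) y by ext; simp]
      exact (ContDiff.sum fun i _ => contDiff_const.smul (hp i)).contDiffOn

end LocalAdditive_s13

/-- The coefficient of `y ^ m` in `(y - x) ^ i / i!`. -/
noncomputable def shiftCoeff (i m : ℕ) (x : ℝ) : ℝ :=
  (-x) ^ (i - m) * (i.choose m) / i.factorial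

/-- The coefficient of `a^{(i)}(x)` in the representation of a local additive operator `A`: the
value at `x` of `A` on `y ↦ (y - x) ^ i / i!`, expanded in monomials so that its continuity in `x`
is visible. -/
noncomputable def jetCoeff (A : (ℝ → ℝ) → (ℝ → ℝ)) (i : ℕ) (x : ℝ) : ℝ :=
  ∑ m ∈ Finset.range (i + 1), shiftCoeff i m x * A (fun y => y ^ m) x

namespace LocalAdditive_s13

variable {k : ℕ} {Ω : Set ℝ} {A : (ℝ → ℝ) → (ℝ → ℝ)}

lemma continuousOn_jetCoeff (hA : LocalAdditive_s13 k Ω A) (i : ℕ) :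
    ContinuousOn (jetCoeff A i) Ω := by
  unfold jetCoeff shiftCoeff
  refine continuousOn_finsetSum _ fun m _ => ContinuousOn.mul (Continuous.continuousOn (by fun_prop))
    (hA.cont _ (ContDiff.contDiffOn (by fun_prop)))

lemma apply_shifted_monomial (hΩ : IsOpen Ω) (hA : LocalAdditive_s13 k Ω A) {x : ℝ} (hx : x ∈ Ω)
    (i : ℕ) : A (fun y => (y - x) ^ i / i.factorial) x = jetCoeff A i x := by
  rw [jetCoeff, ← hA.sum_smooth hΩ hx _ _ (fun m y => y ^ m) (fun m => by fun_prop)]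
  congr 1
  ext y
  simp only [Finset.sum_apply, Pi.smul_apply, smul_eq_mul, shiftCoeff]
  rw [sub_eq_add_neg, add_pow, Finset.sum_div]
  exact Finset.sum_congr rfl fun m _ => by ring

/-- A local additive operator is a linear differential operator of order at most `k`: only the
`k`-jet of the argument matters, so it may be replaced by its Taylor polynomial. -/
lemma eq_sum (hΩ : IsOpen Ω) (hA : LocalAdditive_s13 k Ω A) {a : ℝ → ℝ} (ha : ContDiffOn ℝ k a Ω)
    {x : ℝ} (hx : x ∈ Ω) :
    A a x = ∑ i ∈ Finset.range (k + 1), jetCoeff A i x * iteratedDeriv i a x := by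
  set q : ℝ → ℝ := ∑ i ∈ Finset.range (k + 1),
    iteratedDeriv i a x • (fun y => (y - x) ^ i / (i.factorial : ℝ)) with hq
  have hmono : ∀ i : ℕ, ContDiff ℝ k (fun y : ℝ => (y - x) ^ i / (i.factorial : ℝ)) :=
    fun i => by fun_prop
  have hqsm : ContDiff ℝ k q := by
    rw [hq, show (∑ i ∈ Finset.range (k + 1),
      iteratedDeriv i a x • (fun y => (y - x) ^ i / (i.factorial : ℝ))) =
      fun y => ∑ i ∈ Finset.range (k + 1),
        iteratedDeriv i a x * ((y - x) ^ i / (i.factorial : ℝ)) by ext; simp]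
    fun_prop
  have hqd : ∀ j ≤ k, iteratedDeriv j q x = iteratedDeriv j a x := by
    intro j hj
    have h1 : q = fun y => ∑ i ∈ Finset.range (k + 1),
        (iteratedDeriv i a x / i.factorial) * (fun z => z ^ i) (y - x) := by
      ext y
      simp only [hq, Finset.sum_apply, Pi.smul_apply, smul_eq_mul]
      exact Finset.sum_congr rfl fun i _ => by ring
    have h2 : ∀ i, iteratedDeriv j (fun y => (iteratedDeriv i a x / i.factorial) *
        (fun z => z ^ i) (y - x)) x = if j = i then iteratedDeriv j a x else 0 := by
      intro i
      rw [iteratedDeriv_const_mul_field,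
        congrFun (iteratedDeriv_comp_sub_const j (fun z : ℝ => z ^ i) x) x]
      simp only [sub_self, iteratedDeriv_fun_pow_zero]
      split_ifs with h
      · subst h
        have : (j.factorial : ℝ) ≠ 0 := by positivity
        field_simp
      · simp
    rw [h1, iteratedDeriv_fun_sum (fun i _ => ContDiff.contDiffAt (by fun_prop))]
    simp_rw [h2]
    simp [Nat.lt_succ_of_le hj]
  have hdiff : ContDiffOn ℝ k (a - q) Ω := ha.sub hqsm.contDiffOn
  have hflat : A (a - q) x = 0 := by
    refine hA.eq_zero_of_flat hΩ hdiff hx fun i hi => ?_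
    have hik : (i : WithTop ℕ∞) ≤ k := by exact_mod_cast hi
    rw [iteratedDeriv_sub ((ha.contDiffAt (hΩ.mem_nhds hx)).of_le hik)
      (hqsm.contDiffAt.of_le hik), hqd i hi, sub_self]
  have hsplit := hA.add _ _ hdiff hqsm.contDiffOn x hx
  rw [sub_add_cancel, hflat, zero_add] at hsplit
  rw [hsplit, hq, hA.sum_smooth hΩ hx _ _ _ hmono]
  refine Finset.sum_congr rfl fun i _ => ?_
  rw [hA.apply_shifted_monomial hΩ hx, mul_comm]

end LocalAdditive_s13

/-! ### Logarithmic conjugation and polarization -/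

/-- An operator on `C^k(Ω)` satisfying the third-order Leibniz-type identity. -/
structure IsSecondOrder (k : ℕ) (Ω : Set ℝ) (D : (ℝ → ℝ) → (ℝ → ℝ)) : Prop where
  cont : ∀ f, ContDiffOn ℝ k f Ω → ContinuousOn (D f) Ω
  star : ∀ f g h : ℝ → ℝ,
      ContDiffOn ℝ k f Ω → ContDiffOn ℝ k g Ω → ContDiffOn ℝ k h Ω →
      ∀ x ∈ Ω,
        D (fun y => f y * g y * h y) x
          - f x * D (fun y => g y * h y) x
          - g x * D (fun y => f y * h y) x
          - h x * D (fun y => f y * g y) x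
          + f x * g x * D h x
          + f x * h x * D g x
          + g x * h x * D f x = 0

/-- The conjugate `a ↦ e^{-a} D(e^a)`, which turns products into sums. -/
noncomputable def logConj (D : (ℝ → ℝ) → (ℝ → ℝ)) (a : ℝ → ℝ) (x : ℝ) : ℝ :=
  D (fun y => Real.exp (a y)) x / Real.exp (a x)

/-- The polarization of `logConj D`. -/
noncomputable def polar (D : (ℝ → ℝ) → (ℝ → ℝ)) (a b : ℝ → ℝ) (x : ℝ) : ℝ :=
  logConj D (a + b) x - logConj D a x - logConj D b x

namespace IsSecondOrder

variable {k : ℕ} {Ω : Set ℝ} {D : (ℝ → ℝ) → (ℝ → ℝ)}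

/-- Take cut-offs `φ, ψ` with `φ = 1` near `x` and `ψ = 1` on the support of `φ`, so that `φψ = φ`.
The identity for `(f, φ, ψ)` at `x` reads `D f = D (f ψ) - f D ψ`, which involves `f` only on the
support of `ψ`. -/
lemma germ (hD : IsSecondOrder k Ω D) {f g : ℝ → ℝ}
    (hf : ContDiffOn ℝ k f Ω) (hg : ContDiffOn ℝ k g Ω) {x : ℝ} (hx : x ∈ Ω) (hfg : f =ᶠ[𝓝 x] g) :
    D f x = D g x := by
  obtain ⟨r, hr, hball⟩ := Metric.eventually_nhds_iff_ball.1 hfg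
  let φ : ContDiffBump x := ⟨r / 4, r / 2, by positivity, by linarith⟩
  let ψ : ContDiffBump x := ⟨r / 2, r, by positivity, by linarith⟩
  have hφψ : (fun y => φ y * ψ y) = φ := by
    ext y
    by_cases hy : r / 2 ≤ dist y x
    · rw [φ.zero_of_le_dist hy, zero_mul]
    · rw [ψ.one_of_mem_closedBall (Metric.mem_closedBall.2 (le_of_not_ge hy)), mul_one]
  have hφ1 : φ x = 1 := φ.eventuallyEq_one.eq_of_nhds
  have hψ1 : ψ x = 1 := ψ.eventuallyEq_one.eq_of_nhds
  have key : ∀ F : ℝ → ℝ, ContDiffOn ℝ k F Ω →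
      D F x = D (fun y => F y * ψ y) x - F x * D ψ x := by
    intro F hF
    have h := hD.star F φ ψ hF φ.contDiff.contDiffOn ψ.contDiff.contDiffOn x hx
    have h3 : (fun y => F y * φ y * ψ y) = fun y => F y * φ y := by
      ext y
      rw [mul_assoc, congrFun hφψ y]
    rw [h3, hφψ, hφ1, hψ1] at h
    linarith
  have hprod : (fun y => f y * ψ y) = fun y => g y * ψ y := by
    ext y
    by_cases hy : r ≤ dist y x
    · rw [ψ.zero_of_le_dist hy, mul_zero, mul_zero]
    · rw [hball y (Metric.mem_ball.2 (not_le.1 hy))]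
  rw [key f hf, key g hg, hprod, hfg.eq_of_nhds]

lemma logConj_cont (hD : IsSecondOrder k Ω D) {a : ℝ → ℝ} (ha : ContDiffOn ℝ k a Ω) :
    ContinuousOn (logConj D a) Ω :=
  (hD.cont _ ha.exp).div (Real.continuous_exp.comp_continuousOn ha.continuousOn)
    fun _ _ => (Real.exp_pos _).ne'

lemma logConj_germ (hD : IsSecondOrder k Ω D) {a b : ℝ → ℝ}
    (ha : ContDiffOn ℝ k a Ω) (hb : ContDiffOn ℝ k b Ω) {x : ℝ} (hx : x ∈ Ω) (hab : a =ᶠ[𝓝 x] b) :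
    logConj D a x = logConj D b x := by
  rw [logConj, logConj, hab.eq_of_nhds, hD.germ ha.exp hb.exp hx (hab.fun_comp Real.exp)]

/-- The third difference of `logConj D` vanishes. -/
lemma logConj_third (hD : IsSecondOrder k Ω D) {a b c : ℝ → ℝ} (ha : ContDiffOn ℝ k a Ω)
    (hb : ContDiffOn ℝ k b Ω) (hc : ContDiffOn ℝ k c Ω) {x : ℝ} (hx : x ∈ Ω) :
    logConj D (a + b + c) x - logConj D (b + c) x - logConj D (a + c) x - logConj D (a + b) x
      + logConj D a x + logConj D b x + logConj D c x = 0 := by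
  have h := hD.star _ _ _ ha.exp hb.exp hc.exp x hx
  simp only [← Real.exp_add] at h
  have ea := (Real.exp_pos (a x)).ne'
  have eb := (Real.exp_pos (b x)).ne'
  have ec := (Real.exp_pos (c x)).ne'
  simp only [logConj, Pi.add_apply]
  simp only [Real.exp_add (a x + b x), Real.exp_add (a x), Real.exp_add (b x)] at h ⊢
  field_simp
  linarith

lemma polar_comm (a b : ℝ → ℝ) (x : ℝ) : polar D a b x = polar D b a x := by
  rw [polar, polar, add_comm b a]
  ring

lemma polar_localAdditive (hD : IsSecondOrder k Ω D) {b : ℝ → ℝ}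
    (hb : ContDiffOn ℝ k b Ω) : LocalAdditive_s13 k Ω (fun a => polar D a b) where
  cont a ha :=
    ((hD.logConj_cont (ha.add hb)).sub (hD.logConj_cont ha)).sub (hD.logConj_cont hb)
  add a a' ha ha' x hx := by
    have h := hD.logConj_third ha ha' hb hx
    simp only [polar]
    linarith
  germ a a' ha ha' x hx h := by
    simp only [polar]
    rw [hD.logConj_germ ha ha' hx h,
      hD.logConj_germ (a := a + b) (b := a' + b) (ha.add hb) (ha'.add hb) hx
        (show a + b =ᶠ[𝓝 x] a' + b from h.add EventuallyEq.rfl)]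

/-- The additive part of `logConj D`, left after removing its quadratic part. -/
lemma linearPart_localAdditive (hD : IsSecondOrder k Ω D) :
    LocalAdditive_s13 k Ω (fun a x => logConj D a x - polar D a a x / 2) where
  cont a ha := (hD.logConj_cont ha).sub (((hD.polar_localAdditive ha).cont a ha).div_const 2)
  add a b ha hb x hx := by
    have hab : ContDiffOn ℝ k (a + b) Ω := ha.add hb
    have h1 := (hD.polar_localAdditive hab).add a b ha hb x hx
    have h2 := (hD.polar_localAdditive ha).add a b ha hb x hx
    have h3 := (hD.polar_localAdditive hb).add a b ha hb x hx
    have h4 : polar D a b x = logConj D (a + b) x - logConj D a x - logConj D b x := rfl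
    have h5 := polar_comm (D := D) a (a + b) x
    have h6 := polar_comm (D := D) b (a + b) x
    have h7 := polar_comm (D := D) a b x
    linarith
  germ a b ha hb x hx h := by
    have h1 := (hD.polar_localAdditive ha).germ a b ha hb x hx h
    have h2 := (hD.polar_localAdditive hb).germ a b ha hb x hx h
    have h3 := polar_comm (D := D) b a x
    rw [hD.logConj_germ ha hb hx h, h1, h3, h2]

/-- Both arguments of the polarization are expanded by the structure of local additive operators. -/
lemma polar_eq_sum (hΩ : IsOpen Ω) (hD : IsSecondOrder k Ω D) {a b : ℝ → ℝ}
    (ha : ContDiffOn ℝ k a Ω) (hb : ContDiffOn ℝ k b Ω) {x : ℝ} (hx : x ∈ Ω) :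
    polar D a b x = ∑ i ∈ Finset.range (k + 1), ∑ j ∈ Finset.range (k + 1),
      (∑ m ∈ Finset.range (i + 1),
        shiftCoeff i m x * jetCoeff (fun c => polar D c (fun y => y ^ m)) j x)
        * iteratedDeriv i a x * iteratedDeriv j b x := by
  have hpow : ∀ m : ℕ, ContDiffOn ℝ k (fun y : ℝ => y ^ m) Ω :=
    fun m => ContDiff.contDiffOn (by fun_prop)
  rw [(hD.polar_localAdditive hb).eq_sum hΩ ha hx]
  refine Finset.sum_congr rfl fun i _ => ?_
  rw [jetCoeff]
  have h : ∀ m : ℕ, polar D (fun y => y ^ m) b x = ∑ j ∈ Finset.range (k + 1),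
      jetCoeff (fun c => polar D c (fun y => y ^ m)) j x * iteratedDeriv j b x := fun m => by
    rw [polar_comm]
    exact (hD.polar_localAdditive (hpow m)).eq_sum hΩ hb hx
  simp_rw [h, Finset.mul_sum, Finset.sum_mul]
  rw [Finset.sum_comm]
  exact Finset.sum_congr rfl fun j _ => Finset.sum_congr rfl fun m _ => by ring

end IsSecondOrder

end

/-! ### The representation formula -/

/-- If `D : C^k(Ω) → C(Ω)` satisfies the identity (★), then there are
continuous functions `cᵢ, dᵢⱼ : Ω → ℝ` (`i, j = 0, …, k`) such that for every strictly
positive `f ∈ C^k(Ω)` and all `x ∈ Ω`,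
`D(f)(x) = f(x)·[ Σᵢ cᵢ(x)·(ln∘f)^{(i)}(x) + Σᵢ Σⱼ dᵢⱼ(x)·(ln∘f)^{(i)}(x)·(ln∘f)^{(j)}(x) ]`. -/
theorem statement13 (k : ℕ) (Ω : Set ℝ) (hΩ : IsOpen Ω) (hΩne : Ω.Nonempty)
    (D : (ℝ → ℝ) → (ℝ → ℝ))
    (hmap : ∀ f : ℝ → ℝ, ContDiffOn ℝ k f Ω → ContinuousOn (D f) Ω)
    (hstar : ∀ f g h : ℝ → ℝ,
      ContDiffOn ℝ k f Ω → ContDiffOn ℝ k g Ω → ContDiffOn ℝ k h Ω →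
      ∀ x ∈ Ω,
        D (fun y => f y * g y * h y) x
          - f x * D (fun y => g y * h y) x
          - g x * D (fun y => f y * h y) x
          - h x * D (fun y => f y * g y) x
          + f x * g x * D h x
          + f x * h x * D g x
          + g x * h x * D f x = 0) :
    ∃ (c : Fin (k + 1) → ℝ → ℝ) (d : Fin (k + 1) → Fin (k + 1) → ℝ → ℝ),
      (∀ i, ContinuousOn (c i) Ω) ∧ (∀ i j, ContinuousOn (d i j) Ω) ∧
      ∀ f : ℝ → ℝ, ContDiffOn ℝ k f Ω → (∀ x ∈ Ω, 0 < f x) → ∀ x ∈ Ω,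
        D f x = f x *
          ((∑ i : Fin (k + 1), c i x * iteratedDeriv i (fun y => Real.log (f y)) x)
            + ∑ i : Fin (k + 1), ∑ j : Fin (k + 1),
                d i j x * iteratedDeriv i (fun y => Real.log (f y)) x
                  * iteratedDeriv j (fun y => Real.log (f y)) x) := by
  have hD : IsSecondOrder k Ω D := ⟨hmap, hstar⟩
  have hpow : ∀ m : ℕ, ContDiffOn ℝ k (fun y : ℝ => y ^ m) Ω :=
    fun m => ContDiff.contDiffOn (by fun_prop)
  refine ⟨fun i => jetCoeff (fun a x => logConj D a x - polar D a a x / 2) i,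
    fun i j x => (∑ m ∈ Finset.range (i + 1),
      shiftCoeff i m x * jetCoeff (fun c => polar D c (fun y => y ^ m)) j x) / 2,
    fun i => (hD.linearPart_localAdditive).continuousOn_jetCoeff i, fun i j => ?_, ?_⟩
  · refine (continuousOn_finsetSum _ fun m _ => ContinuousOn.mul ?_
      ((hD.polar_localAdditive (hpow m)).continuousOn_jetCoeff j)).div_const 2
    unfold shiftCoeff
    fun_prop
  · intro f hf hpos x hx
    set a : ℝ → ℝ := fun y => Real.log (f y) with ha_def
    have ha : ContDiffOn ℝ k a Ω := hf.log fun y hy => (hpos y hy).ne'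
    -- Off `Ω` the functions `exp ∘ log ∘ f` and `f` may differ; locality makes this harmless.
    have hexp : (fun y => Real.exp (a y)) =ᶠ[nhds x] f := by
      filter_upwards [hΩ.mem_nhds hx] with y hy
      exact Real.exp_log (hpos y hy)
    have h1 : D f x = f x * logConj D a x := by
      rw [logConj, hD.germ ha.exp hf hx hexp, hexp.eq_of_nhds]
      have := (hpos x hx).ne'
      field_simp
    have h2 := (hD.linearPart_localAdditive).eq_sum hΩ ha hx
    have h3 := hD.polar_eq_sum hΩ ha ha hx
    simp only [Finset.sum_range] at h2 h3
    rw [h1]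
    congr 1
    rw [← h2]
    have h4 : polar D a a x / 2 = logConj D a x - (logConj D a x - polar D a a x / 2) := by ring
    rw [eq_comm, ← eq_sub_iff_add_eq', ← h4, h3, Finset.sum_div]
    refine Finset.sum_congr rfl fun i _ => ?_
    rw [Finset.sum_div]
    refine Finset.sum_congr rfl fun j _ => ?_
    simp only [Finset.sum_range]
    ring
end
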